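/- arXiv:1908.04496 — 4 statements merged into one kernel-verified Lean document; each statement's English description precedes it below -/
import Mathlib

section
/- Define the effective potential V_eff(q) = V(q₁²+q₂², q₃²+q₄², q₁q₃+q₂q₄) + (1/2)(μ₁² I₁⁻¹ + μ₂² I₂⁻¹), where I₁⁻¹ = (q₁²/ν₂ + q₃²/ν₁)/(4A²) and I₂⁻¹ = (q₂²/ν₂ + q₄²/ν₁)/(4A²), and define c₂(q_i,q_j) = (1/2)·∂²f/∂L₃²(q_i,q_j,0). Then: (i) if q* ∈ ℝ⁴ with A(q*) ≠ 0 is a critical point of V_eff, then (q*, 0) is a critical point of the fully reduced Hamiltonian H; (ii) if moreover the Hessian of V_eff at q* is positive definite and (1/(2ν₁))c₂(q₃*,q₄*) + (1/(2ν₂))c₂(q₁*,q₂*) > 0, then (q*, 0) is a strict local minimum of H. -/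
noncomputable section

/-- `f(q_i, q_j, L₃) = ((L_d + L_s)²q_i² + (L_d − L_s)²q_j²)/(16A²)`,
with `L_d = √(Δ² − L₃²)`, `L_s = √(Σ² − L₃²)`, `Δ = μ₁ − μ₂`, `Σ = μ₁ + μ₂`. -/
def fred (μ₁ μ₂ A qi qj L₃ : ℝ) : ℝ :=
  let Ld := Real.sqrt ((μ₁ - μ₂) ^ 2 - L₃ ^ 2)
  let Ls := Real.sqrt ((μ₁ + μ₂) ^ 2 - L₃ ^ 2)
  ((Ld + Ls) ^ 2 * qi ^ 2 + (Ld - Ls) ^ 2 * qj ^ 2) / (16 * A ^ 2)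

/-- The fully reduced Hamiltonian of the three-body problem in `ℝ⁴` on the phase space
`ℝ⁴ × ℝ⁴` (positions `q`, momenta `p`). -/
def Hred (ν₁ ν₂ μ₁ μ₂ : ℝ) (V : (Fin 3 → ℝ) → ℝ) (z : (Fin 4 → ℝ) × (Fin 4 → ℝ)) : ℝ :=
  let q := z.1; let p := z.2
  let A := (q 0 * q 3 - q 1 * q 2) / 2
  let L₃ := q 0 * p 1 - q 1 * p 0 + q 2 * p 3 - q 3 * p 2
  (1 / (2 * ν₁)) * (p 0 ^ 2 + p 1 ^ 2 + fred μ₁ μ₂ A (q 2) (q 3) L₃) +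
    (1 / (2 * ν₂)) * (p 2 ^ 2 + p 3 ^ 2 + fred μ₁ μ₂ A (q 0) (q 1) L₃) +
    V ![q 0 ^ 2 + q 1 ^ 2, q 2 ^ 2 + q 3 ^ 2, q 0 * q 2 + q 1 * q 3]

/-- The effective potential `V_eff = V + (1/2)(μ₁²I₁⁻¹ + μ₂²I₂⁻¹)`. -/
def Veff (ν₁ ν₂ μ₁ μ₂ : ℝ) (V : (Fin 3 → ℝ) → ℝ) (q : Fin 4 → ℝ) : ℝ :=
  let A := (q 0 * q 3 - q 1 * q 2) / 2
  let I₁inv := ((q 0) ^ 2 / ν₂ + (q 2) ^ 2 / ν₁) / (4 * A ^ 2)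
  let I₂inv := ((q 1) ^ 2 / ν₂ + (q 3) ^ 2 / ν₁) / (4 * A ^ 2)
  V ![q 0 ^ 2 + q 1 ^ 2, q 2 ^ 2 + q 3 ^ 2, q 0 * q 2 + q 1 * q 3] +
    (1 / 2) * (μ₁ ^ 2 * I₁inv + μ₂ ^ 2 * I₂inv)

/-- `c₂(q_i,q_j) = (1/2)·∂²f/∂L₃²(q_i,q_j,0)`. -/
def c2 (μ₁ μ₂ A qi qj : ℝ) : ℝ :=
  (1 / 2) * deriv (deriv fun L₃ => fred μ₁ μ₂ A qi qj L₃) 0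

/-- Second-order remainder of `fred` in `L₃`. -/
def kf (μ₁ μ₂ A qi qj L : ℝ) : ℝ :=
  (-2 * (qi ^ 2 + qj ^ 2) + 2 * (qi ^ 2 - qj ^ 2) *
    ((L ^ 2 - (μ₁ - μ₂) ^ 2 - (μ₁ + μ₂) ^ 2) /
      (Real.sqrt ((μ₁ - μ₂) ^ 2 - L ^ 2) * Real.sqrt ((μ₁ + μ₂) ^ 2 - L ^ 2)
        + (μ₁ - μ₂) * (μ₁ + μ₂)))) / (16 * A ^ 2)

lemma fred_zero (μ₁ μ₂ A qi qj : ℝ) (hμ : μ₁ > μ₂) (hμ₂ : 0 ≤ μ₂) :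
    fred μ₁ μ₂ A qi qj 0 = (4 * μ₁ ^ 2 * qi ^ 2 + 4 * μ₂ ^ 2 * qj ^ 2) / (16 * A ^ 2) := by
  have h1 : Real.sqrt ((μ₁ - μ₂) ^ 2 - 0 ^ 2) = μ₁ - μ₂ := by
    rw [zero_pow two_ne_zero, sub_zero]; exact Real.sqrt_sq (by linarith)
  have h2 : Real.sqrt ((μ₁ + μ₂) ^ 2 - 0 ^ 2) = μ₁ + μ₂ := by
    rw [zero_pow two_ne_zero, sub_zero]; exact Real.sqrt_sq (by linarith)
  simp only [fred, h1, h2]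
  ring

lemma fred_eq (μ₁ μ₂ A qi qj L : ℝ) (hμ : μ₁ > μ₂) (hμ₂ : 0 ≤ μ₂)
    (hL : L ^ 2 < (μ₁ - μ₂) ^ 2) :
    fred μ₁ μ₂ A qi qj L = fred μ₁ μ₂ A qi qj 0 + L ^ 2 * kf μ₁ μ₂ A qi qj L := by
  rw [fred_zero _ _ _ _ _ hμ hμ₂]
  have hs : (μ₁ - μ₂) ^ 2 ≤ (μ₁ + μ₂) ^ 2 := by nlinarith
  have h1 := Real.sq_sqrt (show 0 ≤ (μ₁ - μ₂) ^ 2 - L ^ 2 by linarith)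
  have h2 := Real.sq_sqrt (show 0 ≤ (μ₁ + μ₂) ^ 2 - L ^ 2 by linarith)
  have h3 := Real.sqrt_nonneg ((μ₁ - μ₂) ^ 2 - L ^ 2)
  have h4 := Real.sqrt_nonneg ((μ₁ + μ₂) ^ 2 - L ^ 2)
  simp only [fred, kf]
  generalize Real.sqrt ((μ₁ - μ₂) ^ 2 - L ^ 2) = a at *
  generalize Real.sqrt ((μ₁ + μ₂) ^ 2 - L ^ 2) = b at *
  have hpos : 0 < (μ₁ - μ₂) * (μ₁ + μ₂) := mul_pos (by linarith) (by linarith)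
  have hab : 0 < a * b + (μ₁ - μ₂) * (μ₁ + μ₂) := by positivity
  have key : L ^ 2 * ((L ^ 2 - (μ₁ - μ₂) ^ 2 - (μ₁ + μ₂) ^ 2) /
      (a * b + (μ₁ - μ₂) * (μ₁ + μ₂))) = a * b - (μ₁ - μ₂) * (μ₁ + μ₂) := by
    rw [mul_div_assoc', div_eq_iff hab.ne']
    have : (a * b) ^ 2 = ((μ₁ - μ₂) ^ 2 - L ^ 2) * ((μ₁ + μ₂) ^ 2 - L ^ 2) := by
      rw [mul_pow, h1, h2]
    linear_combination -this
  rw [← mul_div_assoc, ← add_div]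
  congr 1
  linear_combination (qi ^ 2 + qj ^ 2) * (h1 + h2) - 2 * (qi ^ 2 - qj ^ 2) * key

lemma kf_contDiffAt {E : Type*} [NormedAddCommGroup E] [NormedSpace ℝ E]
    (μ₁ μ₂ : ℝ) (hμ : μ₁ > μ₂) (hμ₂ : 0 ≤ μ₂) (A qi qj L : E → ℝ) (z : E)
    (hA : ContDiffAt ℝ 2 A z) (hi : ContDiffAt ℝ 2 qi z) (hj : ContDiffAt ℝ 2 qj z)
    (hL : ContDiffAt ℝ 2 L z) (hL0 : L z = 0) (hA0 : A z ≠ 0) :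
    ContDiffAt ℝ 2 (fun x => kf μ₁ μ₂ (A x) (qi x) (qj x) (L x)) z := by
  have hd : 0 < μ₁ - μ₂ := by linarith
  have hs : 0 < μ₁ + μ₂ := by linarith
  have hpos : 0 < (μ₁ - μ₂) * (μ₁ + μ₂) := mul_pos hd hs
  have s1 : ContDiffAt ℝ 2 (fun x => Real.sqrt ((μ₁ - μ₂) ^ 2 - L x ^ 2)) z := by
    apply ContDiffAt.sqrt
    · exact contDiffAt_const.sub (hL.pow 2)
    · rw [hL0]; have := pow_pos hd 2; simp; linarith
  have s2 : ContDiffAt ℝ 2 (fun x => Real.sqrt ((μ₁ + μ₂) ^ 2 - L x ^ 2)) z := by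
    apply ContDiffAt.sqrt
    · exact contDiffAt_const.sub (hL.pow 2)
    · rw [hL0]; have := pow_pos hs 2; simp; linarith
  unfold kf
  apply ContDiffAt.div
  · apply ContDiffAt.add
    · exact contDiffAt_const.mul ((hi.pow 2).add (hj.pow 2))
    · apply ContDiffAt.mul
      · exact contDiffAt_const.mul ((hi.pow 2).sub (hj.pow 2))
      · apply ContDiffAt.div
        · exact ((hL.pow 2).sub contDiffAt_const).sub contDiffAt_const
        · exact (s1.mul s2).add contDiffAt_const
        · positivity
  · exact contDiffAt_const.mul (hA.pow 2)
  · positivity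

lemma c2_eq (μ₁ μ₂ A qi qj : ℝ) (hμ : μ₁ > μ₂) (hμ₂ : 0 ≤ μ₂) (hA : A ≠ 0) :
    c2 μ₁ μ₂ A qi qj = kf μ₁ μ₂ A qi qj 0 := by
  have hd : 0 < μ₁ - μ₂ := by linarith
  have hk : ContDiffAt ℝ 2 (fun x : ℝ => kf μ₁ μ₂ A qi qj x) 0 :=
    kf_contDiffAt μ₁ μ₂ hμ hμ₂ (fun _ => A) (fun _ => qi) (fun _ => qj) (fun x => x) 0
      contDiffAt_const contDiffAt_const contDiffAt_const contDiffAt_id rfl hA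
  have hev : ∀ᶠ x : ℝ in nhds 0, x ^ 2 < (μ₁ - μ₂) ^ 2 := by
    have : Continuous fun x : ℝ => x ^ 2 := by fun_prop
    exact this.continuousAt.eventually_lt continuousAt_const (by simpa using pow_pos hd 2)
  set k : ℝ → ℝ := fun x => kf μ₁ μ₂ A qi qj x with hkdef
  have hfe : (fun L => fred μ₁ μ₂ A qi qj L) =ᶠ[nhds 0]
      fun L => fred μ₁ μ₂ A qi qj 0 + L ^ 2 * k L := by
    filter_upwards [hev] with x hx using fred_eq _ _ _ _ _ _ hμ hμ₂ hx
  have hdk : ∀ᶠ x : ℝ in nhds 0, DifferentiableAt ℝ k x := by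
    filter_upwards [hk.eventually (by simp)] with x hx using hx.differentiableAt (by norm_num)
  have hde : deriv (fun L => fred μ₁ μ₂ A qi qj L) =ᶠ[nhds 0]
      fun L => 2 * L * k L + L ^ 2 * deriv k L := by
    filter_upwards [hfe.deriv, hdk] with x hx hx2
    rw [hx]
    have := ((hasDerivAt_pow 2 x).mul hx2.hasDerivAt).const_add (fred μ₁ μ₂ A qi qj 0)
    refine (this.congr_deriv ?_).deriv
    norm_num
  have hdd : DifferentiableAt ℝ (deriv k) 0 := by
    have h1 : ContDiffAt ℝ 1 (fderiv ℝ k) 0 := hk.fderiv_right (by norm_num)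
    have h2 := (h1.differentiableAt (by norm_num)).clm_apply (differentiableAt_const (1 : ℝ))
    exact h2
  unfold c2
  rw [hde.deriv_eq]
  have h1 : HasDerivAt (fun L : ℝ => 2 * L * k L) (2 * k 0) 0 := by
    have := ((hasDerivAt_id (0 : ℝ)).const_mul 2).mul hdk.self_of_nhds.hasDerivAt
    refine this.congr_deriv ?_
    simp
  have h2 : HasDerivAt (fun L : ℝ => L ^ 2 * deriv k L) 0 0 := by
    have := (hasDerivAt_pow 2 (0 : ℝ)).mul hdd.hasDerivAt
    refine this.congr_deriv ?_
    simp
  have h3 : HasDerivAt (fun L : ℝ => 2 * L * k L + L ^ 2 * deriv k L) (2 * k 0 + 0) 0 := h1.add h2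
  rw [h3.deriv]
  simp [hkdef]

/-- Second derivative test. -/
lemma strict_min_of_hess {E : Type*} [NormedAddCommGroup E] [NormedSpace ℝ E]
    [FiniteDimensional ℝ E] (g : E → ℝ) (x : E) (hg : ContDiffAt ℝ 2 g x)
    (h0 : fderiv ℝ g x = 0)
    (hB : ∀ v : E, v ≠ 0 → 0 < fderiv ℝ (fun q => fderiv ℝ g q v) x v) :
    ∀ᶠ y in nhds x, y ≠ x → g x < g y := by
  have hD1 : ContDiffAt ℝ 1 (fderiv ℝ g) x := hg.fderiv_right (by norm_num)
  have hD : DifferentiableAt ℝ (fderiv ℝ g) x := hD1.differentiableAt (by norm_num)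
  set B := fderiv ℝ (fderiv ℝ g) x with hBdef
  have hB' : ∀ v : E, v ≠ 0 → 0 < B v v := by
    intro v hv
    have := hB v hv
    have h2 := (hD.hasFDerivAt.clm_apply (hasFDerivAt_const v x)).fderiv
    rw [h2] at this
    simpa using this
  obtain ⟨m, hm, hmB⟩ : ∃ m > 0, ∀ v : E, m * ‖v‖ ^ 2 ≤ B v v := by
    by_cases hne : (Metric.sphere (0 : E) 1).Nonempty
    · obtain ⟨u, hu, hmin⟩ := (isCompact_sphere (0 : E) 1).exists_isMinOn hne
        (f := fun v => B v v) (by fun_prop)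
      have hu0 : u ≠ 0 := by
        rintro rfl; simp at hu
      refine ⟨B u u, hB' u hu0, fun v => ?_⟩
      by_cases hv : v = 0
      · simp [hv]
      have hn : 0 < ‖v‖ := norm_pos_iff.2 hv
      have hmem : ‖v‖⁻¹ • v ∈ Metric.sphere (0 : E) 1 := by
        simp [norm_smul, hn.ne']
      have := hmin hmem
      simp only [Set.mem_ofPred_eq, map_smul, smul_apply, smul_eq_mul] at this
      calc B u u * ‖v‖ ^ 2 ≤ (‖v‖⁻¹ * (‖v‖⁻¹ * B v v)) * ‖v‖ ^ 2 := by gcongr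
        _ = B v v := by field_simp
    · refine ⟨1, one_pos, fun v => ?_⟩
      have hv : v = 0 := by
        by_contra hv
        have hn : 0 < ‖v‖ := norm_pos_iff.2 hv
        exact hne ⟨‖v‖⁻¹ • v, by simp [norm_smul, hn.ne']⟩
      simp [hv]
  have hlo := hD.hasFDerivAt.isLittleO.def (half_pos hm)
  have hdiff : ∀ᶠ y in nhds x, DifferentiableAt ℝ g y := by
    filter_upwards [hg.eventually (by simp)] with y hy using hy.differentiableAt (by norm_num)
  obtain ⟨r, hr, hball⟩ := Metric.eventually_nhds_iff_ball.1 (hlo.and hdiff)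
  filter_upwards [Metric.ball_mem_nhds x hr] with y hy hyx
  set v := y - x with hv
  have hv0 : v ≠ 0 := sub_ne_zero.2 hyx
  have hvn : 0 < ‖v‖ := norm_pos_iff.2 hv0
  have hvr : ‖v‖ < r := by simpa [dist_eq_norm] using hy
  have hin : ∀ t ∈ Set.Icc (0 : ℝ) 1, x + t • v ∈ Metric.ball x r := by
    intro t ht
    simp only [Metric.mem_ball, dist_eq_norm, add_sub_cancel_left, norm_smul, Real.norm_eq_abs,
      abs_of_nonneg ht.1]
    nlinarith [ht.2]
  have hder : ∀ t ∈ Set.Icc (0 : ℝ) 1,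
      HasDerivAt (fun t : ℝ => g (x + t • v)) (fderiv ℝ g (x + t • v) v) t := by
    intro t ht
    have h1 : HasDerivAt (fun t : ℝ => x + t • v) v t := by
      simpa using ((hasDerivAt_id t).smul_const v).const_add x
    exact (hball _ (hin t ht)).2.hasFDerivAt.comp_hasDerivAt t h1
  have hmono : StrictMonoOn (fun t : ℝ => g (x + t • v)) (Set.Icc 0 1) := by
    apply strictMonoOn_of_deriv_pos (convex_Icc 0 1)
    · exact fun t ht => (hder t ht).continuousAt.continuousWithinAt
    · intro t ht
      rw [interior_Icc] at ht
      have ht' : t ∈ Set.Icc (0 : ℝ) 1 := ⟨ht.1.le, ht.2.le⟩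
      rw [(hder t ht').deriv]
      have h1 := (hball _ (hin t ht')).1
      rw [h0, sub_zero, add_sub_cancel_left] at h1
      have h2 := (fderiv ℝ g (x + t • v) - B (t • v)).le_opNorm v
      have h3 := hmB v
      simp only [norm_smul, Real.norm_eq_abs, abs_of_pos ht.1] at h1
      have h4 : |fderiv ℝ g (x + t • v) v - t * B v v| ≤ m / 2 * (t * ‖v‖) * ‖v‖ := by
        refine le_trans ?_ (mul_le_mul_of_nonneg_right h1 hvn.le)
        simpa using h2
      have h5 := (abs_le.1 h4).1
      have h6 : t * (m * ‖v‖ ^ 2) ≤ t * B v v := mul_le_mul_of_nonneg_left h3 ht.1.le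
      have h7 : 0 < t * (m * ‖v‖ ^ 2) := mul_pos ht.1 (by positivity)
      nlinarith
  have := hmono (Set.left_mem_Icc.2 zero_le_one) (Set.right_mem_Icc.2 zero_le_one) zero_lt_one
  simpa [hv] using this

lemma Veff_contDiffAt (ν₁ ν₂ μ₁ μ₂ : ℝ) (V : (Fin 3 → ℝ) → ℝ) (hV : ContDiff ℝ 2 V)
    (q : Fin 4 → ℝ) (hA : (q 0 * q 3 - q 1 * q 2) / 2 ≠ 0) :
    ContDiffAt ℝ 2 (Veff ν₁ ν₂ μ₁ μ₂ V) q := by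
  have hc : ∀ i : Fin 4, ContDiffAt ℝ 2 (fun q : Fin 4 → ℝ => q i) q := fun i =>
    (contDiff_apply ℝ ℝ i).contDiffAt
  have hAc : ContDiffAt ℝ 2 (fun q : Fin 4 → ℝ => 4 * ((q 0 * q 3 - q 1 * q 2) / 2) ^ 2) q :=
    contDiffAt_const.mul
      (((((hc 0).mul (hc 3)).sub ((hc 1).mul (hc 2))).div_const 2).pow 2)
  have hA4 : 4 * ((q 0 * q 3 - q 1 * q 2) / 2) ^ 2 ≠ 0 := by positivity
  unfold Veff
  apply ContDiffAt.add
  · apply hV.contDiffAt.comp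
    rw [contDiffAt_pi]
    intro i
    fin_cases i
    · exact ((hc 0).pow 2).add ((hc 1).pow 2)
    · exact ((hc 2).pow 2).add ((hc 3).pow 2)
    · exact ((hc 0).mul (hc 2)).add ((hc 1).mul (hc 3))
  · apply contDiffAt_const.mul
    apply ContDiffAt.add
    · exact contDiffAt_const.mul
        (((((hc 0).pow 2).div_const ν₂).add (((hc 2).pow 2).div_const ν₁)).div hAc hA4)
    · exact contDiffAt_const.mul
        (((((hc 1).pow 2).div_const ν₂).add (((hc 3).pow 2).div_const ν₁)).div hAc hA4)

/-- The angular momentum. -/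
def Lz (z : (Fin 4 → ℝ) × (Fin 4 → ℝ)) : ℝ :=
  z.1 0 * z.2 1 - z.1 1 * z.2 0 + z.1 2 * z.2 3 - z.1 3 * z.2 2

/-- The area function. -/
def Az (z : (Fin 4 → ℝ) × (Fin 4 → ℝ)) : ℝ := (z.1 0 * z.1 3 - z.1 1 * z.1 2) / 2

/-- The coefficient of `L₃²` in the Hamiltonian. -/
def Kz (ν₁ ν₂ μ₁ μ₂ : ℝ) (z : (Fin 4 → ℝ) × (Fin 4 → ℝ)) : ℝ :=
  (1 / (2 * ν₁)) * kf μ₁ μ₂ (Az z) (z.1 2) (z.1 3) (Lz z) +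
    (1 / (2 * ν₂)) * kf μ₁ μ₂ (Az z) (z.1 0) (z.1 1) (Lz z)

/-- The kinetic energy. -/
def Tz (ν₁ ν₂ : ℝ) (z : (Fin 4 → ℝ) × (Fin 4 → ℝ)) : ℝ :=
  (1 / (2 * ν₁)) * (z.2 0 ^ 2 + z.2 1 ^ 2) + (1 / (2 * ν₂)) * (z.2 2 ^ 2 + z.2 3 ^ 2)

lemma Hred_eq (ν₁ ν₂ μ₁ μ₂ : ℝ) (hμ : μ₁ > μ₂) (hμ₂ : 0 ≤ μ₂) (V : (Fin 3 → ℝ) → ℝ)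
    (z : (Fin 4 → ℝ) × (Fin 4 → ℝ)) (hL : Lz z ^ 2 < (μ₁ - μ₂) ^ 2) :
    Hred ν₁ ν₂ μ₁ μ₂ V z =
      Veff ν₁ ν₂ μ₁ μ₂ V z.1 + (Tz ν₁ ν₂ z + Lz z ^ 2 * Kz ν₁ ν₂ μ₁ μ₂ z) := by
  have h : Hred ν₁ ν₂ μ₁ μ₂ V z =
      (1 / (2 * ν₁)) * (z.2 0 ^ 2 + z.2 1 ^ 2 + fred μ₁ μ₂ (Az z) (z.1 2) (z.1 3) (Lz z)) +
      (1 / (2 * ν₂)) * (z.2 2 ^ 2 + z.2 3 ^ 2 + fred μ₁ μ₂ (Az z) (z.1 0) (z.1 1) (Lz z)) +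
      V ![z.1 0 ^ 2 + z.1 1 ^ 2, z.1 2 ^ 2 + z.1 3 ^ 2, z.1 0 * z.1 2 + z.1 1 * z.1 3] := rfl
  have h' : Veff ν₁ ν₂ μ₁ μ₂ V z.1 =
      V ![z.1 0 ^ 2 + z.1 1 ^ 2, z.1 2 ^ 2 + z.1 3 ^ 2, z.1 0 * z.1 2 + z.1 1 * z.1 3] +
      (1 / 2) * (μ₁ ^ 2 * (((z.1 0) ^ 2 / ν₂ + (z.1 2) ^ 2 / ν₁) / (4 * Az z ^ 2)) +
        μ₂ ^ 2 * (((z.1 1) ^ 2 / ν₂ + (z.1 3) ^ 2 / ν₁) / (4 * Az z ^ 2))) := rfl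
  rw [h, h', fred_eq _ _ _ _ _ _ hμ hμ₂ hL, fred_eq _ _ _ _ _ _ hμ hμ₂ hL,
    fred_zero _ _ _ _ _ hμ hμ₂, fred_zero _ _ _ _ _ hμ hμ₂]
  unfold Kz Tz
  ring

lemma Kz_contDiffAt (ν₁ ν₂ μ₁ μ₂ : ℝ) (hμ : μ₁ > μ₂) (hμ₂ : 0 ≤ μ₂)
    (z : (Fin 4 → ℝ) × (Fin 4 → ℝ)) (hL0 : Lz z = 0) (hA0 : Az z ≠ 0) :
    ContDiffAt ℝ 2 Lz z ∧ ContDiffAt ℝ 2 (Kz ν₁ ν₂ μ₁ μ₂) z ∧ ContDiffAt ℝ 2 (Tz ν₁ ν₂) z := by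
  have hc : ∀ i : Fin 4, ContDiffAt ℝ 2 (fun z : (Fin 4 → ℝ) × (Fin 4 → ℝ) => z.1 i) z := fun i =>
    ((contDiff_apply ℝ ℝ i).comp contDiff_fst).contDiffAt
  have hp : ∀ i : Fin 4, ContDiffAt ℝ 2 (fun z : (Fin 4 → ℝ) × (Fin 4 → ℝ) => z.2 i) z := fun i =>
    ((contDiff_apply ℝ ℝ i).comp contDiff_snd).contDiffAt
  have hA : ContDiffAt ℝ 2 Az z := (((hc 0).mul (hc 3)).sub ((hc 1).mul (hc 2))).div_const 2
  have hL : ContDiffAt ℝ 2 Lz z :=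
    ((((hc 0).mul (hp 1)).sub ((hc 1).mul (hp 0))).add ((hc 2).mul (hp 3))).sub
      ((hc 3).mul (hp 2))
  refine ⟨hL, ?_, ?_⟩
  · exact (contDiffAt_const.mul
      (kf_contDiffAt μ₁ μ₂ hμ hμ₂ _ _ _ _ z hA (hc 2) (hc 3) hL hL0 hA0)).add
      (contDiffAt_const.mul
      (kf_contDiffAt μ₁ μ₂ hμ hμ₂ _ _ _ _ z hA (hc 0) (hc 1) hL hL0 hA0))
  · exact (contDiffAt_const.mul (((hp 0).pow 2).add ((hp 1).pow 2))).add
      (contDiffAt_const.mul (((hp 2).pow 2).add ((hp 3).pow 2)))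

lemma sq_add_sq_zero (a b : ℝ) (h : a ^ 2 + b ^ 2 = 0) : a = 0 ∧ b = 0 := by
  constructor
  · exact pow_eq_zero_iff two_ne_zero |>.1 (by linarith [sq_nonneg a, sq_nonneg b] : a ^ 2 = 0)
  · exact pow_eq_zero_iff two_ne_zero |>.1 (by linarith [sq_nonneg a, sq_nonneg b] : b ^ 2 = 0)

lemma Tz_pos (ν₁ ν₂ : ℝ) (hν₁ : 0 < ν₁) (hν₂ : 0 < ν₂)
    (z : (Fin 4 → ℝ) × (Fin 4 → ℝ)) (hp : z.2 ≠ 0) : 0 < Tz ν₁ ν₂ z := by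
  have a1 : 0 < 1 / (2 * ν₁) := by positivity
  have a2 : 0 < 1 / (2 * ν₂) := by positivity
  have b1 : 0 ≤ z.2 0 ^ 2 + z.2 1 ^ 2 := by positivity
  have b2 : 0 ≤ z.2 2 ^ 2 + z.2 3 ^ 2 := by positivity
  have c1 := mul_nonneg a1.le b1
  have c2 := mul_nonneg a2.le b2
  refine lt_of_le_of_ne (add_nonneg c1 c2) fun h0 => hp ?_
  unfold Tz at h0
  have e1 : 1 / (2 * ν₁) * (z.2 0 ^ 2 + z.2 1 ^ 2) = 0 := by linarith
  have e2 : 1 / (2 * ν₂) * (z.2 2 ^ 2 + z.2 3 ^ 2) = 0 := by linarith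
  obtain ⟨z0, z1⟩ := sq_add_sq_zero _ _ ((mul_eq_zero.1 e1).resolve_left a1.ne')
  obtain ⟨z2, z3⟩ := sq_add_sq_zero _ _ ((mul_eq_zero.1 e2).resolve_left a2.ne')
  ext i
  fin_cases i
  · exact z0
  · exact z1
  · exact z2
  · exact z3

/-- (i) A critical point `q*` of `V_eff` (with `A(q*) ≠ 0`) gives a critical point
`(q*,0)` of the fully reduced Hamiltonian `H`; (ii) if moreover the Hessian of `V_eff`
at `q*` is positive definite and `(1/(2ν₁))c₂(q₃*,q₄*) + (1/(2ν₂))c₂(q₁*,q₂*) > 0`,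
then `(q*,0)` is a strict local minimum of `H`. -/
theorem Veff_critical_min (ν₁ ν₂ μ₁ μ₂ : ℝ) (hν₁ : 0 < ν₁) (hν₂ : 0 < ν₂)
    (hμ : μ₁ > μ₂) (hμ₂ : 0 ≤ μ₂) (V : (Fin 3 → ℝ) → ℝ) (hV : ContDiff ℝ 2 V)
    (qstar : Fin 4 → ℝ) (hA : (qstar 0 * qstar 3 - qstar 1 * qstar 2) / 2 ≠ 0)
    (hcrit : fderiv ℝ (Veff ν₁ ν₂ μ₁ μ₂ V) qstar = 0) :
    fderiv ℝ (Hred ν₁ ν₂ μ₁ μ₂ V) (qstar, (0 : Fin 4 → ℝ)) = 0 ∧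
    ((∀ v : Fin 4 → ℝ, v ≠ 0 →
        0 < fderiv ℝ (fun q => fderiv ℝ (Veff ν₁ ν₂ μ₁ μ₂ V) q v) qstar v) →
      0 < (1 / (2 * ν₁)) *
            c2 μ₁ μ₂ ((qstar 0 * qstar 3 - qstar 1 * qstar 2) / 2) (qstar 2) (qstar 3) +
          (1 / (2 * ν₂)) *
            c2 μ₁ μ₂ ((qstar 0 * qstar 3 - qstar 1 * qstar 2) / 2) (qstar 0) (qstar 1) →
      ∀ᶠ z in nhdsWithin (qstar, (0 : Fin 4 → ℝ)) {(qstar, (0 : Fin 4 → ℝ))}ᶜ,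
        Hred ν₁ ν₂ μ₁ μ₂ V (qstar, (0 : Fin 4 → ℝ)) < Hred ν₁ ν₂ μ₁ μ₂ V z) := by
  have hd : 0 < μ₁ - μ₂ := by linarith
  set z₀ : (Fin 4 → ℝ) × (Fin 4 → ℝ) := (qstar, 0) with hz₀
  have hL0 : Lz z₀ = 0 := by simp [Lz, hz₀]
  have hT0 : Tz ν₁ ν₂ z₀ = 0 := by simp [Tz, hz₀]
  obtain ⟨hLc, hKc, hTc⟩ := Kz_contDiffAt ν₁ ν₂ μ₁ μ₂ hμ hμ₂ z₀ hL0 hA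
  have hVc := Veff_contDiffAt ν₁ ν₂ μ₁ μ₂ V hV qstar hA
  have hLev : ∀ᶠ z in nhds z₀, Lz z ^ 2 < (μ₁ - μ₂) ^ 2 :=
    (hLc.continuousAt.pow 2).eventually_lt continuousAt_const (by
      show Lz z₀ ^ 2 < _
      rw [hL0]; simpa using pow_pos hd 2)
  have hH : ∀ᶠ z in nhds z₀, Hred ν₁ ν₂ μ₁ μ₂ V z =
      Veff ν₁ ν₂ μ₁ μ₂ V z.1 + (Tz ν₁ ν₂ z + Lz z ^ 2 * Kz ν₁ ν₂ μ₁ μ₂ z) := by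
    filter_upwards [hLev] with z hz using Hred_eq ν₁ ν₂ μ₁ μ₂ hμ hμ₂ V z hz
  have hTnn : ∀ z, 0 ≤ Tz ν₁ ν₂ z := fun z => by unfold Tz; positivity
  refine ⟨?_, fun hhess hc => ?_⟩
  · have hV1 : HasFDerivAt (fun z : (Fin 4 → ℝ) × (Fin 4 → ℝ) => Veff ν₁ ν₂ μ₁ μ₂ V z.1)
        (0 : ((Fin 4 → ℝ) × (Fin 4 → ℝ)) →L[ℝ] ℝ) z₀ := by
      have h1 : HasFDerivAt (Veff ν₁ ν₂ μ₁ μ₂ V) (0 : (Fin 4 → ℝ) →L[ℝ] ℝ) z₀.1 := by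
        rw [← hcrit]; exact (hVc.differentiableAt (by norm_num)).hasFDerivAt
      exact (h1.comp z₀ (hasFDerivAt_fst (𝕜 := ℝ) (p := z₀))).congr_fderiv
        (ContinuousLinearMap.zero_comp _)
    have hT1 : HasFDerivAt (Tz ν₁ ν₂) (0 : ((Fin 4 → ℝ) × (Fin 4 → ℝ)) →L[ℝ] ℝ) z₀ := by
      have hmin : IsLocalMin (Tz ν₁ ν₂) z₀ :=
        Filter.Eventually.of_forall fun z => by rw [hT0]; exact hTnn z
      rw [← hmin.fderiv_eq_zero]
      exact (hTc.differentiableAt (by norm_num)).hasFDerivAt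
    have hL1 : HasFDerivAt (fun z => Lz z ^ 2 * Kz ν₁ ν₂ μ₁ μ₂ z)
        (0 : ((Fin 4 → ℝ) × (Fin 4 → ℝ)) →L[ℝ] ℝ) z₀ := by
      have h1 := ((hLc.differentiableAt (by norm_num)).hasFDerivAt.pow 2).mul
        (hKc.differentiableAt (by norm_num)).hasFDerivAt
      refine h1.congr_fderiv ?_
      simp [hL0]
    have := (hV1.add (hT1.add hL1)).congr_of_eventuallyEq (f₁ := Hred ν₁ ν₂ μ₁ μ₂ V) hH
    rw [this.fderiv]; simp
  · have hK0 : 0 < Kz ν₁ ν₂ μ₁ μ₂ z₀ := by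
      rw [c2_eq _ _ _ _ _ hμ hμ₂ hA, c2_eq _ _ _ _ _ hμ hμ₂ hA] at hc
      unfold Kz
      rw [hL0]
      exact hc
    have hKev : ∀ᶠ z in nhds z₀, 0 < Kz ν₁ ν₂ μ₁ μ₂ z :=
      hKc.continuousAt.eventually (lt_mem_nhds hK0)
    have hmin := strict_min_of_hess _ qstar hVc hcrit hhess
    have hmin' : ∀ᶠ z in nhds z₀, z.1 ≠ qstar →
        Veff ν₁ ν₂ μ₁ μ₂ V qstar < Veff ν₁ ν₂ μ₁ μ₂ V z.1 :=
      (continuous_fst.tendsto z₀).eventually hmin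
    have hH0 := hH.self_of_nhds
    rw [hT0, hL0] at hH0
    rw [eventually_nhdsWithin_iff]
    filter_upwards [hH, hKev, hmin'] with z h1 h2 h3 hz
    rw [hH0, h1]
    have h4 := hTnn z
    have h5 : 0 ≤ Lz z ^ 2 * Kz ν₁ ν₂ μ₁ μ₂ z := by positivity
    show Veff ν₁ ν₂ μ₁ μ₂ V qstar + _ < _
    by_cases hq : z.1 = qstar
    · have hp : z.2 ≠ 0 := fun hp => hz (Prod.ext hq hp)
      have hT : 0 < Tz ν₁ ν₂ z := Tz_pos ν₁ ν₂ hν₁ hν₂ z hp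
      rw [hq]
      linarith
    · have := h3 hq
      linarith

end
end

section
/- Let m₂ = m₃ = m > 0, m₁ > 0 and μ₁ > μ₂ > 0. Then there exist q₁, q₄ > 0 satisfying the two equations m²/q₁² + 4mm₁q₁/(q₁²+4q₄²)^{3/2} − μ₂²/(ν₁q₁³) = 0 and 16mm₁q₄/(q₁²+4q₄²)^{3/2} − μ₁²/(ν₂q₄³) = 0; and for any q₁, q₄ > 0 satisfying these two equations, the point with coordinates (q₁, q₂, q₃, q₄) = (q₁, 0, 0, q₄) and momenta p₁ = p₂ = p₃ = p₄ = 0 is a critical point of the fully reduced Hamiltonian H (so the corresponding isosceles triangle is a relative equilibrium of the three-body problem in ℝ⁴). -/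
noncomputable section

/-- The Newtonian potential of the three-body problem in the translation-reduced
variables: `V(s₁,s₂,s₃) = −m₂m₃/√s₁ − m₃m₁/√(a₂²s₁+s₂+2a₂s₃) − m₁m₂/√(a₃²s₁+s₂−2a₃s₃)`
with `a₂ = m₂/(m₂+m₃)`, `a₃ = m₃/(m₂+m₃)`. -/
def Vnewt (m₁ m₂ m₃ : ℝ) (s : Fin 3 → ℝ) : ℝ :=
  -(m₂ * m₃ / Real.sqrt (s 0)) -
    m₃ * m₁ / Real.sqrt ((m₂ / (m₂ + m₃)) ^ 2 * s 0 + s 1 + 2 * (m₂ / (m₂ + m₃)) * s 2) -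
    m₁ * m₂ / Real.sqrt ((m₃ / (m₂ + m₃)) ^ 2 * s 0 + s 1 - 2 * (m₃ / (m₂ + m₃)) * s 2)

lemma iso_rpow (x : ℝ) (hx : 0 < x) : x ^ ((3 : ℝ) / 2) = x * Real.sqrt x := by
  rw [Real.sqrt_eq_rpow, show (3 : ℝ) / 2 = 1 + 1 / 2 by norm_num, Real.rpow_add hx, Real.rpow_one]

lemma iso_exists_t (a b D : ℝ) (ha : 0 < a) (hb : 0 < b) (hD : 0 < D) :
    ∃ t : ℝ, 0 < t ∧ a * ((1 + 4 * t ^ 2) * Real.sqrt (1 + 4 * t ^ 2)) + b = D * t ^ 4 := by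
  let g : ℝ → ℝ := fun t => D * t ^ 4 - (a * ((1 + 4 * t ^ 2) * Real.sqrt (1 + 4 * t ^ 2)) + b)
  have hg : Continuous g := by fun_prop
  obtain ⟨T, hT1, hT2⟩ : ∃ T : ℝ, 1 ≤ T ∧ 15 * a + b ≤ D * T := by
    refine ⟨max 1 ((15 * a + b) / D), le_max_left _ _, ?_⟩
    have : (15 * a + b) / D ≤ max 1 ((15 * a + b) / D) := le_max_right _ _
    rw [div_le_iff₀ hD] at this
    linarith
  have hs : Real.sqrt (1 + 4 * T ^ 2) ≤ 3 * T := by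
    rw [Real.sqrt_le_left (by linarith)]
    nlinarith
  have hT0 : 0 ≤ g T := by
    have h1 : (1 + 4 * T ^ 2) * Real.sqrt (1 + 4 * T ^ 2) ≤ (5 * T ^ 2) * (3 * T) :=
      mul_le_mul (by nlinarith) hs (Real.sqrt_nonneg _) (by positivity)
    have h2 : a * ((1 + 4 * T ^ 2) * Real.sqrt (1 + 4 * T ^ 2)) ≤ a * ((5 * T ^ 2) * (3 * T)) :=
      mul_le_mul_of_nonneg_left h1 ha.le
    have h3 : (1 : ℝ) ≤ T ^ 3 := one_le_pow₀ hT1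
    have h4 : b * 1 ≤ b * T ^ 3 := mul_le_mul_of_nonneg_left h3 hb.le
    have h5 : (15 * a + b) * T ^ 3 ≤ D * T * T ^ 3 :=
      mul_le_mul_of_nonneg_right hT2 (by positivity)
    show 0 ≤ D * T ^ 4 - (a * ((1 + 4 * T ^ 2) * Real.sqrt (1 + 4 * T ^ 2)) + b)
    nlinarith
  have h0 : g 0 < 0 := by
    simp only [g]
    norm_num
    linarith
  obtain ⟨t, ht, hgt⟩ := intermediate_value_Icc (by linarith : (0 : ℝ) ≤ T) hg.continuousOn
    (show (0 : ℝ) ∈ Set.Icc (g 0) (g T) from ⟨h0.le, hT0⟩)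
  refine ⟨t, lt_of_le_of_ne ht.1 ?_, ?_⟩
  · rintro rfl
    linarith
  · simp only [g] at hgt
    linarith

lemma iso_sqrt_deriv (D : ℝ) (hD : 0 < D) (L : ℝ → ℝ) (L' : ℝ) (hL : HasDerivAt L L' 0)
    (h0 : L 0 = 0) : HasDerivAt (fun t => Real.sqrt (D ^ 2 - L t ^ 2)) 0 0 := by
  have h1 : HasDerivAt (fun t => D ^ 2 - L t ^ 2) 0 0 := by
    have := (hL.pow 2).const_sub (D ^ 2)
    simpa [h0] using this
  have h2 := h1.sqrt (by rw [h0]; simp [hD.ne'])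
  simpa using h2

lemma iso_fred_deriv (μ₁ μ₂ : ℝ) (h12 : μ₂ < μ₁) (h2 : 0 < μ₂) (A qi qj L : ℝ → ℝ)
    (A' qi' qj' L' : ℝ) (hA : HasDerivAt A A' 0) (hqi : HasDerivAt qi qi' 0)
    (hqj : HasDerivAt qj qj' 0) (hL : HasDerivAt L L' 0) (hL0 : L 0 = 0) (hA0 : A 0 ≠ 0) :
    HasDerivAt (fun t => fred μ₁ μ₂ (A t) (qi t) (qj t) (L t))
      ((2 * μ₁ ^ 2 * qi 0 * qi' + 2 * μ₂ ^ 2 * qj 0 * qj') / (4 * A 0 ^ 2)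
        - 2 * (μ₁ ^ 2 * qi 0 ^ 2 + μ₂ ^ 2 * qj 0 ^ 2) * A' / (4 * A 0 ^ 3)) 0 := by
  have hd := iso_sqrt_deriv (μ₁ - μ₂) (by linarith) L L' hL hL0
  have hs := iso_sqrt_deriv (μ₁ + μ₂) (by linarith) L L' hL hL0
  have h := ((((hd.add hs).pow 2).mul (hqi.pow 2)).add (((hd.sub hs).pow 2).mul (hqj.pow 2))).div
    ((hA.pow 2).const_mul 16) (by simpa using hA0)
  have e1 : Real.sqrt ((μ₁ - μ₂) ^ 2 - L 0 ^ 2) = μ₁ - μ₂ := by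
    rw [hL0]; simpa using Real.sqrt_sq (by linarith : 0 ≤ μ₁ - μ₂)
  have e2 : Real.sqrt ((μ₁ + μ₂) ^ 2 - L 0 ^ 2) = μ₁ + μ₂ := by
    rw [hL0]; simpa using Real.sqrt_sq (by linarith : 0 ≤ μ₁ + μ₂)
  unfold fred
  refine h.congr_deriv ?_
  simp only [Pi.add_apply, Pi.sub_apply, Pi.mul_apply, Pi.pow_apply, e1, e2]
  field_simp
  ring

lemma iso_inv_sqrt_deriv (c : ℝ) (S : ℝ → ℝ) (S' : ℝ) (hS : HasDerivAt S S' 0) (h0 : 0 < S 0) :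
    HasDerivAt (fun t => c / Real.sqrt (S t)) (-(c * S') / (2 * (S 0 * Real.sqrt (S 0)))) 0 := by
  have hp : 0 < Real.sqrt (S 0) := Real.sqrt_pos.mpr h0
  have h := (hasDerivAt_const (0 : ℝ) c).div (hS.sqrt h0.ne') hp.ne'
  refine h.congr_deriv ?_
  rw [Real.sq_sqrt h0.le]
  field_simp
  ring

/-- For two equal masses `m₂ = m₃ = m` there exist `q₁, q₄ > 0` solving the isosceles
equilibrium equations, and every such solution gives a critical point (relative
equilibrium) of the fully reduced Hamiltonian with `q₂ = q₃ = 0`, `p = 0`. -/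
theorem isosceles_equilibrium (m m₁ μ₁ μ₂ : ℝ) (hm : 0 < m) (hm₁ : 0 < m₁)
    (hμ : μ₁ > μ₂) (hμ₂ : 0 < μ₂) :
    (∃ q₁ q₄ : ℝ, 0 < q₁ ∧ 0 < q₄ ∧
      m ^ 2 / q₁ ^ 2 + 4 * m * m₁ * q₁ / (q₁ ^ 2 + 4 * q₄ ^ 2) ^ ((3 : ℝ) / 2) -
        μ₂ ^ 2 / ((m / 2) * q₁ ^ 3) = 0 ∧
      16 * m * m₁ * q₄ / (q₁ ^ 2 + 4 * q₄ ^ 2) ^ ((3 : ℝ) / 2) -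
        μ₁ ^ 2 / ((2 * m * m₁ / (2 * m + m₁)) * q₄ ^ 3) = 0) ∧
    ∀ q₁ q₄ : ℝ, 0 < q₁ → 0 < q₄ →
      m ^ 2 / q₁ ^ 2 + 4 * m * m₁ * q₁ / (q₁ ^ 2 + 4 * q₄ ^ 2) ^ ((3 : ℝ) / 2) -
        μ₂ ^ 2 / ((m / 2) * q₁ ^ 3) = 0 →
      16 * m * m₁ * q₄ / (q₁ ^ 2 + 4 * q₄ ^ 2) ^ ((3 : ℝ) / 2) -
        μ₁ ^ 2 / ((2 * m * m₁ / (2 * m + m₁)) * q₄ ^ 3) = 0 →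
      fderiv ℝ (Hred (m / 2) (2 * m * m₁ / (2 * m + m₁)) μ₁ μ₂ (Vnewt m₁ m m))
        (![q₁, 0, 0, q₄], (0 : Fin 4 → ℝ)) = 0 := by
  have hμ₁ : 0 < μ₁ := by linarith
  constructor
  · obtain ⟨t, ht, hte⟩ := iso_exists_t (μ₁ ^ 2 * (m / 2) * m ^ 2) (μ₁ ^ 2 * (m / 2) * (4 * m * m₁))
      (16 * m * m₁ * (2 * m * m₁ / (2 * m + m₁)) * μ₂ ^ 2) (by positivity) (by positivity)
      (by positivity)
    have hν : 0 < 2 * m * m₁ / (2 * m + m₁) := by positivity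
    generalize 2 * m * m₁ / (2 * m + m₁) = ν at *
    have hu : 0 < 1 + 4 * t ^ 2 := by positivity
    have hsu : 0 < Real.sqrt (1 + 4 * t ^ 2) := Real.sqrt_pos.mpr hu
    obtain ⟨ρ, hρ⟩ : ∃ ρ, ρ = (1 + 4 * t ^ 2) * Real.sqrt (1 + 4 * t ^ 2) := ⟨_, rfl⟩
    have hρ0 : 0 < ρ := by rw [hρ]; positivity
    rw [← hρ] at hte
    obtain ⟨x, hx⟩ : ∃ x, x = μ₁ ^ 2 * ρ / (16 * m * m₁ * ν * t ^ 4) := ⟨_, rfl⟩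
    have hx0 : 0 < x := by rw [hx]; positivity
    have hx2 : x * (16 * m * m₁ * ν * t ^ 4) = μ₁ ^ 2 * ρ := by
      rw [hx]; field_simp
    have hR : (x ^ 2 + 4 * (t * x) ^ 2) ^ ((3 : ℝ) / 2) = x ^ 3 * ρ := by
      rw [iso_rpow _ (by positivity), show x ^ 2 + 4 * (t * x) ^ 2 = x ^ 2 * (1 + 4 * t ^ 2) by ring,
        Real.sqrt_mul (by positivity), Real.sqrt_sq hx0.le, hρ]
      ring
    refine ⟨x, t * x, hx0, by positivity, ?_, ?_⟩
    · rw [hR]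
      have key : x * (m ^ 2 * ρ + 4 * m * m₁) * (m / 2) = μ₂ ^ 2 * ρ := by
        have hk : 0 < 16 * m * m₁ * ν * t ^ 4 := by positivity
        apply mul_right_cancel₀ hk.ne'
        calc x * (m ^ 2 * ρ + 4 * m * m₁) * (m / 2) * (16 * m * m₁ * ν * t ^ 4)
            = (x * (16 * m * m₁ * ν * t ^ 4)) * ((m ^ 2 * ρ + 4 * m * m₁) * (m / 2)) := by ring
          _ = ρ * (μ₁ ^ 2 * (m / 2) * m ^ 2 * ρ + μ₁ ^ 2 * (m / 2) * (4 * m * m₁)) := by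
            rw [hx2]; ring
          _ = _ := by rw [hte]; ring
      have : m ^ 2 / x ^ 2 + 4 * m * m₁ * x / (x ^ 3 * ρ) - μ₂ ^ 2 / (m / 2 * x ^ 3)
          = (x * (m ^ 2 * ρ + 4 * m * m₁) * (m / 2) - μ₂ ^ 2 * ρ) / (m / 2 * x ^ 3 * ρ) := by
        field_simp
      rw [this, key]; simp
    · rw [hR]
      have : 16 * m * m₁ * (t * x) / (x ^ 3 * ρ) - μ₁ ^ 2 / (ν * (t * x) ^ 3)
          = (x * (16 * m * m₁ * ν * t ^ 4) - μ₁ ^ 2 * ρ) / (ν * t ^ 3 * x ^ 3 * ρ) := by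
        field_simp
      rw [this, hx2]; simp
  · intro x y hx hy h1 h2
    have hν : 0 < 2 * m * m₁ / (2 * m + m₁) := by positivity
    generalize 2 * m * m₁ / (2 * m + m₁) = ν at *
    have hS : 0 < x ^ 2 / 4 + y ^ 2 := by positivity
    obtain ⟨r, hr⟩ : ∃ r, r = Real.sqrt (x ^ 2 / 4 + y ^ 2) := ⟨_, rfl⟩
    have hr0 : 0 < r := by rw [hr]; exact Real.sqrt_pos.mpr hS
    have hr2 : r ^ 2 = x ^ 2 / 4 + y ^ 2 := by rw [hr]; exact Real.sq_sqrt hS.le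
    have hR : (x ^ 2 + 4 * y ^ 2) ^ ((3 : ℝ) / 2) = 8 * r ^ 3 := by
      rw [iso_rpow _ (by positivity),
        show x ^ 2 + 4 * y ^ 2 = (2 * r) ^ 2 by rw [mul_pow, hr2]; ring,
        Real.sqrt_sq (by positivity)]
      ring
    rw [hR] at h1 h2
    have half : m / (m + m) = 1 / 2 := by field_simp; norm_num
    have hdiff : DifferentiableAt ℝ (Hred (m / 2) ν μ₁ μ₂ (Vnewt m₁ m m))
        (![x, 0, 0, y], (0 : Fin 4 → ℝ)) := by
      have s1 : (μ₁ - μ₂) ^ 2 ≠ 0 := pow_ne_zero _ (by linarith)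
      have s2 : (μ₁ + μ₂) ^ 2 ≠ 0 := pow_ne_zero _ (by linarith)
      have s3 : (1 / 2 : ℝ) ^ 2 * x ^ 2 + y ^ 2 ≠ 0 := by positivity
      have s4 : Real.sqrt ((1 / 2 : ℝ) ^ 2 * x ^ 2 + y ^ 2) ≠ 0 := by positivity
      unfold Hred fred Vnewt
      simp only [half, Matrix.cons_val]
      fun_prop (disch := (simp; first | positivity | (constructor <;> positivity) | grind))
    apply ContinuousLinearMap.ext
    rintro ⟨v, w⟩
    have hc : HasDerivAt (fun t : ℝ => ((![x, 0, 0, y], (0 : Fin 4 → ℝ)) : (Fin 4 → ℝ) × (Fin 4 → ℝ))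
        + t • (v, w)) (v, w) 0 := by
      simpa using ((hasDerivAt_id (0 : ℝ)).smul_const (v, w)).const_add
        ((![x, 0, 0, y], (0 : Fin 4 → ℝ)) : (Fin 4 → ℝ) × (Fin 4 → ℝ))
    have hA := HasFDerivAt.comp_hasDerivAt_of_eq (0 : ℝ) hdiff.hasFDerivAt hc (by simp)
    have lin : ∀ c d : ℝ, HasDerivAt (fun t : ℝ => c + t * d) d 0 := by
      intro c d
      simpa using ((hasDerivAt_id (0 : ℝ)).mul_const d).const_add c
    have q0 := lin x (v 0)
    have q1 := lin 0 (v 1)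
    have q2 := lin 0 (v 2)
    have q3 := lin y (v 3)
    have p0 := lin 0 (w 0)
    have p1 := lin 0 (w 1)
    have p2 := lin 0 (w 2)
    have p3 := lin 0 (w 3)
    have dA := ((q0.mul q3).sub (q1.mul q2)).div_const 2
    have dL := (((q0.mul p1).sub (q1.mul p0)).add (q2.mul p3)).sub (q3.mul p2)
    have f1 := iso_fred_deriv μ₁ μ₂ hμ hμ₂ _ _ _ _ _ _ _ _ dA q2 q3 dL (by simp)
      (by simp [hx.ne', hy.ne'])
    have f2 := iso_fred_deriv μ₁ μ₂ hμ hμ₂ _ _ _ _ _ _ _ _ dA q0 q1 dL (by simp)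
      (by simp [hx.ne', hy.ne'])
    have S0 := (q0.pow 2).add (q1.pow 2)
    have S1 := (q2.pow 2).add (q3.pow 2)
    have S2 := (q0.mul q2).add (q1.mul q3)
    have V0 := iso_inv_sqrt_deriv (m * m) _ _ S0 (by simp; positivity)
    have V1 := iso_inv_sqrt_deriv (m * m₁) _ _
      (((S0.const_mul ((1 / 2 : ℝ) ^ 2)).add S1).add (S2.const_mul (2 * (1 / 2 : ℝ))))
      (by simp; positivity)
    have V2 := iso_inv_sqrt_deriv (m₁ * m) _ _
      (((S0.const_mul ((1 / 2 : ℝ) ^ 2)).add S1).sub (S2.const_mul (2 * (1 / 2 : ℝ))))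
      (by simp; positivity)
    have hB := (((((p0.pow 2).add (p1.pow 2)).add f1).const_mul (1 / (2 * (m / 2)))).add
      ((((p2.pow 2).add (p3.pow 2)).add f2).const_mul (1 / (2 * ν)))).add ((V0.neg.sub V1).sub V2)
    have hB' : HasDerivAt ((Hred (m / 2) ν μ₁ μ₂ (Vnewt m₁ m m)) ∘
        (fun t : ℝ => ((![x, 0, 0, y], (0 : Fin 4 → ℝ)) : (Fin 4 → ℝ) × (Fin 4 → ℝ))
        + t • (v, w))) 0 0 := by
      refine (hB.congr_deriv ?_).congr_of_eventuallyEq (Filter.Eventually.of_forall fun t => ?_)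
      · have es : (1 / 2 : ℝ) ^ 2 * x ^ 2 + y ^ 2 = r ^ 2 := by rw [hr2]; ring
        have ex : Real.sqrt (x ^ 2) = x := Real.sqrt_sq hx.le
        simp only [Pi.add_apply, Pi.sub_apply, Pi.mul_apply, Pi.pow_apply, zero_mul, add_zero,
          mul_zero, sub_zero, zero_add, ne_eq, OfNat.ofNat_ne_zero, not_false_eq_true, zero_pow,
          es, ex, Real.sqrt_sq hr0.le, Nat.cast_ofNat, Nat.add_one_sub_one, pow_one]
        have h1' : (m ^ 2 / x ^ 2 + 4 * m * m₁ * x / (8 * r ^ 3) - μ₂ ^ 2 / (m / 2 * x ^ 3)) * v 0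
          + (16 * m * m₁ * y / (8 * r ^ 3) - μ₁ ^ 2 / (ν * y ^ 3)) * v 3 = 0 := by
          rw [h1, h2]; ring
        rw [← h1']
        field_simp
        ring
      · simp [Hred, Vnewt, half, -Matrix.cons_add]
    simpa using hA.unique hB'

end
end

section
/- Let m₂ = m₃ = m > 0 and m₁ > 0, and fix μ₁ > 0. Then there exists ε > 0 such that for every μ₂ ∈ (0, ε) there are q₁, q₄ > 0 satisfying the isosceles equilibrium equations m²/q₁² + 4mm₁q₁/(q₁²+4q₄²)^{3/2} − μ₂²/(ν₁q₁³) = 0 and 16mm₁q₄/(q₁²+4q₄²)^{3/2} − μ₁²/(ν₂q₄³) = 0 for which the point (q₁, 0, 0, q₄, 0, 0, 0, 0) (positions (q₁,0,0,q₄), momenta all zero) is a strict local minimum of the fully reduced Hamiltonian H with parameters (μ₁, μ₂). -/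
noncomputable section

/-- Separated (Jensen / Hölder) upper bound for `1/√(X²+Y²)`. -/
lemma aux_jensen (a b X Y : ℝ) (ha : 0 < a) (hb : 0 < b) (hX : 0 < X) (hY : 0 < Y)
    (hab : a ^ 2 + b ^ 2 = 1) : 1 / Real.sqrt (X ^ 2 + Y ^ 2) ≤ a ^ 3 / X + b ^ 3 / Y := by
  have hS : 0 < X ^ 2 + Y ^ 2 := by positivity
  have hR : 0 < a ^ 3 / X + b ^ 3 / Y := by positivity
  rw [div_le_iff₀ (Real.sqrt_pos.mpr hS)]
  have key : 1 ≤ (a ^ 3 / X + b ^ 3 / Y) ^ 2 * (X ^ 2 + Y ^ 2) := by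
    have h1 : (a ^ 3 / X + b ^ 3 / Y) ^ 2 * (X ^ 2 + Y ^ 2) - (a ^ 2 + b ^ 2) ^ 3 =
        (b ^ 3 * (X * b - Y * a) ^ 2 * (X * b + 2 * Y * a) * X +
          a ^ 3 * (Y * a - X * b) ^ 2 * (Y * a + 2 * X * b) * Y) / (X ^ 2 * Y ^ 2) := by
      field_simp
      ring
    have h2 : 0 ≤ (b ^ 3 * (X * b - Y * a) ^ 2 * (X * b + 2 * Y * a) * X +
          a ^ 3 * (Y * a - X * b) ^ 2 * (Y * a + 2 * X * b) * Y) / (X ^ 2 * Y ^ 2) := by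
      positivity
    rw [hab] at h1
    linarith
  have h3 : 1 ≤ ((a ^ 3 / X + b ^ 3 / Y) * Real.sqrt (X ^ 2 + Y ^ 2)) ^ 2 := by
    rw [mul_pow, Real.sq_sqrt hS.le]
    exact key
  have h4 : 0 ≤ (a ^ 3 / X + b ^ 3 / Y) * Real.sqrt (X ^ 2 + Y ^ 2) := by positivity
  nlinarith

lemma aux_sqrt_one (S T : ℝ) (hS : 0 < S) (h1 : -S < 4 * T) (h2 : 4 * T < S) :
    1 / Real.sqrt (S + T) ≤
      (1 - (T / S) / 2 + (T / S) ^ 2 / 2) / Real.sqrt S := by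
  obtain ⟨e, rfl⟩ : ∃ e, T = S * e := ⟨T / S, by field_simp⟩
  have he : S * e / S = e := by field_simp
  rw [he]
  have e1 : -1 < 4 * e := by nlinarith
  have e2 : 4 * e < 1 := by nlinarith
  have h3 : S + S * e = S * (1 + e) := by ring
  rw [h3, Real.sqrt_mul hS.le]
  have hs := Real.sqrt_pos.mpr hS
  have hp : 0 < 1 + e := by linarith
  have ht := Real.sqrt_pos.mpr hp
  have hg : 0 < 1 - e / 2 + e ^ 2 / 2 := by nlinarith
  have key : 1 ≤ (1 - e / 2 + e ^ 2 / 2) * Real.sqrt (1 + e) := by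
    have : 1 ≤ ((1 - e / 2 + e ^ 2 / 2) * Real.sqrt (1 + e)) ^ 2 := by
      rw [mul_pow, Real.sq_sqrt hp.le]
      have : (1 - e / 2 + e ^ 2 / 2) ^ 2 * (1 + e) - 1 =
        e ^ 2 * ((1 + 3 * e - e ^ 2 + e ^ 3) / 4) := by ring
      have h5 : 0 ≤ 1 + 3 * e - e ^ 2 + e ^ 3 := by
        nlinarith [mul_nonneg (sq_nonneg e) hp.le]
      have : 0 ≤ e ^ 2 * ((1 + 3 * e - e ^ 2 + e ^ 3) / 4) := by positivity
      linarith
    have : 0 ≤ (1 - e / 2 + e ^ 2 / 2) * Real.sqrt (1 + e) := by positivity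
    nlinarith
  rw [div_le_div_iff₀ (by positivity) hs]
  nlinarith

lemma aux_sqrt_pair (S T : ℝ) (hS : 0 < S) (h1 : -S < 4 * T) (h2 : 4 * T < S) :
    1 / Real.sqrt (S + T) + 1 / Real.sqrt (S - T) ≤
      2 * (1 / Real.sqrt S) + T ^ 2 / (S ^ 2 * Real.sqrt S) := by
  have a1 := aux_sqrt_one S T hS h1 h2
  have a2 := aux_sqrt_one S (-T) hS (by linarith) (by linarith)
  rw [← sub_eq_add_neg] at a2
  have hs := Real.sqrt_pos.mpr hS
  have : (1 - (T / S) / 2 + (T / S) ^ 2 / 2) / Real.sqrt S +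
      (1 - (-T / S) / 2 + (-T / S) ^ 2 / 2) / Real.sqrt S =
      2 * (1 / Real.sqrt S) + T ^ 2 / (S ^ 2 * Real.sqrt S) := by
    field_simp
    ring
  linarith

/-- Monotonicity in `L₃²`. -/
lemma aux_momentum (μ₁ μ₂ L P Q : ℝ) (h2 : 0 < μ₂) (h12 : μ₂ < μ₁) (hL : L ^ 2 < (μ₁ - μ₂) ^ 2)
    (hP : 0 ≤ P) (hPQ : μ₁ ^ 2 * P < μ₂ ^ 2 * Q) :
    4 * μ₁ ^ 2 * P + 4 * μ₂ ^ 2 * Q ≤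
      (Real.sqrt ((μ₁ - μ₂) ^ 2 - L ^ 2) + Real.sqrt ((μ₁ + μ₂) ^ 2 - L ^ 2)) ^ 2 * P +
      (Real.sqrt ((μ₁ - μ₂) ^ 2 - L ^ 2) - Real.sqrt ((μ₁ + μ₂) ^ 2 - L ^ 2)) ^ 2 * Q := by
  have hd : 0 < (μ₁ - μ₂) ^ 2 - L ^ 2 := by linarith
  have hs : 0 < (μ₁ + μ₂) ^ 2 - L ^ 2 := by nlinarith [mul_pos h2 (h2.trans h12)]
  set d := Real.sqrt ((μ₁ - μ₂) ^ 2 - L ^ 2) with hdd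
  set s := Real.sqrt ((μ₁ + μ₂) ^ 2 - L ^ 2) with hss
  have d0 : 0 < d := Real.sqrt_pos.mpr hd
  have s0 : 0 < s := Real.sqrt_pos.mpr hs
  have d2 : d ^ 2 = (μ₁ - μ₂) ^ 2 - L ^ 2 := Real.sq_sqrt hd.le
  have s2 : s ^ 2 = (μ₁ + μ₂) ^ 2 - L ^ 2 := Real.sq_sqrt hs.le
  have dle : d ≤ μ₁ - μ₂ := by
    apply Real.sqrt_le_iff.mpr
    constructor <;> nlinarith [sq_nonneg L]
  have sle : s ≤ μ₁ + μ₂ := by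
    apply Real.sqrt_le_iff.mpr
    constructor <;> nlinarith [sq_nonneg L]
  have hxy : (d + s) ^ 2 * (d - s) ^ 2 = 16 * μ₁ ^ 2 * μ₂ ^ 2 := by
    have : (d + s) ^ 2 * (d - s) ^ 2 = (d ^ 2 - s ^ 2) ^ 2 := by ring
    rw [this, d2, s2]; ring
  have hx : (d + s) ^ 2 ≤ 4 * μ₁ ^ 2 := by nlinarith
  have hx0 : 0 < (d + s) ^ 2 := by positivity
  generalize (d + s) ^ 2 = x at *
  generalize (d - s) ^ 2 = y at *
  have hy : y = 16 * μ₁ ^ 2 * μ₂ ^ 2 / x := by field_simp; linarith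
  have hQ : 0 < μ₂ ^ 2 * Q := lt_of_le_of_lt (by positivity) hPQ
  rw [hy, ← sub_nonneg]
  have : x * P + 16 * μ₁ ^ 2 * μ₂ ^ 2 / x * Q - (4 * μ₁ ^ 2 * P + 4 * μ₂ ^ 2 * Q) =
    (4 * μ₁ ^ 2 - x) * (4 * (μ₂ ^ 2 * Q) - x * P) / x := by field_simp; ring
  rw [this]
  apply div_nonneg _ hx0.le
  apply mul_nonneg (by linarith)
  nlinarith

/-- Lower bound of the Newtonian potential. -/
lemma aux_pot (m m₁ a b q1 q2 q3 q4 : ℝ) (hm : 0 < m) (hm₁ : 0 < m₁)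
    (ha : 0 < a) (hb : 0 < b) (hab : a ^ 2 + b ^ 2 = 1) (h1 : 0 < q1) (h4 : 0 < q4)
    (hT1 : -((q1 ^ 2 + q2 ^ 2) / 4 + (q3 ^ 2 + q4 ^ 2)) < 4 * (q1 * q3 + q2 * q4))
    (hT2 : 4 * (q1 * q3 + q2 * q4) < (q1 ^ 2 + q2 ^ 2) / 4 + (q3 ^ 2 + q4 ^ 2)) :
    -(m ^ 2 + 4 * (m * m₁) * a ^ 3) / Real.sqrt (q1 ^ 2 + q2 ^ 2)
      - 2 * (m * m₁) * b ^ 3 / Real.sqrt (q3 ^ 2 + q4 ^ 2)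
      - m * m₁ * (q1 * q3 + q2 * q4) ^ 2 / q4 ^ 5 ≤
    Vnewt m₁ m m ![q1 ^ 2 + q2 ^ 2, q3 ^ 2 + q4 ^ 2, q1 * q3 + q2 * q4] := by
  have hmm : m / (m + m) = 1 / 2 := by field_simp; norm_num
  have s1p : 0 < q1 ^ 2 + q2 ^ 2 := by positivity
  have s2p : 0 < q3 ^ 2 + q4 ^ 2 := by positivity
  have hsq : q4 ^ 2 ≤ q3 ^ 2 + q4 ^ 2 := by nlinarith [sq_nonneg q3]
  simp only [Vnewt, hmm, Matrix.cons_val_zero, Matrix.cons_val_one, Matrix.cons_val]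
  generalize q1 * q3 + q2 * q4 = T at *
  generalize q1 ^ 2 + q2 ^ 2 = s1 at *
  generalize q3 ^ 2 + q4 ^ 2 = s2 at *
  have e1 : (1 / 2 : ℝ) ^ 2 * s1 + s2 + 2 * (1 / 2) * T = (s1 / 4 + s2) + T := by ring
  have e2 : (1 / 2 : ℝ) ^ 2 * s1 + s2 - 2 * (1 / 2) * T = (s1 / 4 + s2) - T := by ring
  rw [e1, e2]
  have hS : 0 < s1 / 4 + s2 := by positivity
  have hp := aux_sqrt_pair (s1 / 4 + s2) T hS hT1 hT2
  have r1 := Real.sqrt_pos.mpr s1p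
  have r2 := Real.sqrt_pos.mpr s2p
  have hj := aux_jensen a b (Real.sqrt s1 / 2) (Real.sqrt s2) ha hb (by positivity) r2 hab
  rw [div_pow, Real.sq_sqrt s1p.le, Real.sq_sqrt s2p.le] at hj
  norm_num only at hj
  have hge : q4 ^ 5 ≤ (s1 / 4 + s2) ^ 2 * Real.sqrt (s1 / 4 + s2) := by
    have g1 : q4 ^ 2 ≤ s1 / 4 + s2 := by linarith
    have g2 : q4 ≤ Real.sqrt (s1 / 4 + s2) := Real.le_sqrt_of_sq_le g1
    calc q4 ^ 5 = (q4 ^ 2) ^ 2 * q4 := by ring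
      _ ≤ _ := by gcongr
  have hT : T ^ 2 / ((s1 / 4 + s2) ^ 2 * Real.sqrt (s1 / 4 + s2)) ≤ T ^ 2 / q4 ^ 5 := by gcongr
  have k0 : 0 < m * m₁ := by positivity
  have fin : 1 / Real.sqrt (s1 / 4 + s2 + T) + 1 / Real.sqrt (s1 / 4 + s2 - T) ≤
     2 * (a ^ 3 / (Real.sqrt s1 / 2) + b ^ 3 / Real.sqrt s2) + T ^ 2 / q4 ^ 5 := by linarith
  have fin2 := mul_le_mul_of_nonneg_left fin k0.le
  have l : m * m₁ * (2 * (a ^ 3 / (Real.sqrt s1 / 2) + b ^ 3 / Real.sqrt s2) + T ^ 2 / q4 ^ 5)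
    = 4 * (m * m₁) * a ^ 3 / Real.sqrt s1 + 2 * (m * m₁) * b ^ 3 / Real.sqrt s2
      + m * m₁ * T ^ 2 / q4 ^ 5 := by field_simp; ring
  have r : m * m₁ * (1 / Real.sqrt (s1 / 4 + s2 + T) + 1 / Real.sqrt (s1 / 4 + s2 - T)) =
    m * m₁ / Real.sqrt (s1 / 4 + s2 + T) + m₁ * m / Real.sqrt (s1 / 4 + s2 - T) := by ring
  have l2 : -(m ^ 2 + 4 * (m * m₁) * a ^ 3) / Real.sqrt s1 =
    - (m * m / Real.sqrt s1) - 4 * (m * m₁) * a ^ 3 / Real.sqrt s1 := by ring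
  linarith

/-- Lower bound of the kinetic part at zero momentum. -/
lemma aux_kin (μ₁ μ₂ ν₁ ν₂ k q1 q2 q3 q4 : ℝ) (hν₁ : 0 < ν₁) (hν₂ : 0 < ν₂)
    (h2 : 0 < μ₂) (h12 : μ₂ < μ₁) (h1 : 0 < q1) (h4 : 0 < q4)
    (hd : 0 < q1 * q4 - q2 * q3)
    (h7 : 2 * ν₁ * q1 ^ 2 < ν₂ * q4 ^ 2)
    (h8 : 0 < μ₂ ^ 2 * ν₂ * q4 ^ 5 - 2 * (μ₁ ^ 2 - μ₂ ^ 2) * ν₁ * (q1 ^ 2 + q2 ^ 2) * q4 ^ 3 -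
      2 * ν₁ * ν₂ * k * (q1 * q4 - q2 * q3) ^ 2 * (q1 ^ 2 + q2 ^ 2)) :
    ∃ c₁ > 0, ∃ c₂ > 0,
      μ₂ ^ 2 / (2 * ν₁ * (q1 ^ 2 + q2 ^ 2)) + μ₁ ^ 2 / (2 * ν₂ * (q3 ^ 2 + q4 ^ 2)) +
        c₁ * q3 ^ 2 + c₂ * (q1 * q3 + q2 * q4) ^ 2 + k * (q1 * q3 + q2 * q4) ^ 2 / q4 ^ 5 ≤
      (μ₁ ^ 2 * q3 ^ 2 + μ₂ ^ 2 * q4 ^ 2) / (2 * ν₁ * (q1 * q4 - q2 * q3) ^ 2) +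
      (μ₁ ^ 2 * q1 ^ 2 + μ₂ ^ 2 * q2 ^ 2) / (2 * ν₂ * (q1 * q4 - q2 * q3) ^ 2) := by
  have s1p : 0 < q1 ^ 2 + q2 ^ 2 := by positivity
  have s2p : 0 < q3 ^ 2 + q4 ^ 2 := by positivity
  have hD : 0 < μ₁ ^ 2 - μ₂ ^ 2 := by nlinarith
  set D := μ₁ ^ 2 - μ₂ ^ 2 with hDd
  have hμ : μ₁ ^ 2 = μ₂ ^ 2 + D := by rw [hDd]; ring
  set d := (q1 * q4 - q2 * q3) ^ 2 with hdd
  have dp : 0 < d := by positivity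
  set T := q1 * q3 + q2 * q4 with hTd
  have lag : d = (q1 ^ 2 + q2 ^ 2) * (q3 ^ 2 + q4 ^ 2) - T ^ 2 := by rw [hdd, hTd]; ring
  refine ⟨D / d * (1 / (2 * ν₁) - q1 ^ 2 / (ν₂ * q4 ^ 2)), ?_,
    (μ₂ ^ 2 * ν₂ * q4 ^ 5 - 2 * D * ν₁ * (q1 ^ 2 + q2 ^ 2) * q4 ^ 3 -
      2 * ν₁ * ν₂ * k * d * (q1 ^ 2 + q2 ^ 2)) / (2 * ν₁ * ν₂ * q4 ^ 5 * (q1 ^ 2 + q2 ^ 2) * d),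
    by positivity, ?_⟩
  · apply mul_pos (by positivity)
    rw [sub_pos, div_lt_div_iff₀ (by positivity) (by positivity)]
    linarith
  have i1 : (μ₁ ^ 2 * q3 ^ 2 + μ₂ ^ 2 * q4 ^ 2) / (2 * ν₁ * d) =
      μ₂ ^ 2 / (2 * ν₁ * (q1 ^ 2 + q2 ^ 2)) + μ₂ ^ 2 * T ^ 2 / (2 * ν₁ * (q1 ^ 2 + q2 ^ 2) * d)
        + D * q3 ^ 2 / (2 * ν₁ * d) := by
    have : T ^ 2 = (q1 ^ 2 + q2 ^ 2) * (q3 ^ 2 + q4 ^ 2) - d := by linarith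
    rw [this, hμ]
    field_simp
    ring
  have i2 : (μ₁ ^ 2 * q1 ^ 2 + μ₂ ^ 2 * q2 ^ 2) / (2 * ν₂ * d) =
      μ₁ ^ 2 / (2 * ν₂ * (q3 ^ 2 + q4 ^ 2)) + μ₁ ^ 2 * T ^ 2 / (2 * ν₂ * (q3 ^ 2 + q4 ^ 2) * d)
        - D * q2 ^ 2 / (2 * ν₂ * d) := by
    have : T ^ 2 = (q1 ^ 2 + q2 ^ 2) * (q3 ^ 2 + q4 ^ 2) - d := by linarith
    have h' : μ₂ ^ 2 = μ₁ ^ 2 - D := by linarith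
    rw [this, h']
    field_simp
    ring
  have i3 : 0 ≤ μ₁ ^ 2 * T ^ 2 / (2 * ν₂ * (q3 ^ 2 + q4 ^ 2) * d) := by positivity
  have i4 : q2 ^ 2 ≤ (2 * T ^ 2 + 2 * q1 ^ 2 * q3 ^ 2) / q4 ^ 2 := by
    rw [le_div_iff₀ (by positivity)]
    have : q2 * q4 = T - q1 * q3 := by rw [hTd]; ring
    have : q2 ^ 2 * q4 ^ 2 = (T - q1 * q3) ^ 2 := by rw [← this]; ring
    nlinarith [sq_nonneg (T + q1 * q3)]
  have i5 : D * q2 ^ 2 / (2 * ν₂ * d) ≤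
      D * ((2 * T ^ 2 + 2 * q1 ^ 2 * q3 ^ 2) / q4 ^ 2) / (2 * ν₂ * d) := by gcongr
  have i6 : D / d * (1 / (2 * ν₁) - q1 ^ 2 / (ν₂ * q4 ^ 2)) * q3 ^ 2 +
      (μ₂ ^ 2 * ν₂ * q4 ^ 5 - 2 * D * ν₁ * (q1 ^ 2 + q2 ^ 2) * q4 ^ 3 -
      2 * ν₁ * ν₂ * k * d * (q1 ^ 2 + q2 ^ 2)) / (2 * ν₁ * ν₂ * q4 ^ 5 * (q1 ^ 2 + q2 ^ 2) * d)
        * T ^ 2 + k * T ^ 2 / q4 ^ 5 =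
      μ₂ ^ 2 * T ^ 2 / (2 * ν₁ * (q1 ^ 2 + q2 ^ 2) * d) + D * q3 ^ 2 / (2 * ν₁ * d) -
      D * ((2 * T ^ 2 + 2 * q1 ^ 2 * q3 ^ 2) / q4 ^ 2) / (2 * ν₂ * d) := by
    field_simp
    ring
  linarith

lemma aux_sum_sq (a b : ℝ) (h : a ^ 2 + b ^ 2 = 0) : a = 0 := by
  have : a ^ 2 = 0 := by nlinarith [sq_nonneg a, sq_nonneg b]
  exact pow_eq_zero_iff two_ne_zero |>.mp this

lemma aux_sq_id (c ν s x : ℝ) (hν : 0 < ν) (hs : 0 < s) (hx : 0 < x) :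
    c ^ 2 / (2 * ν * s) + -(c ^ 2 / (ν * x)) / Real.sqrt s =
      c ^ 2 / (2 * ν) * (1 / Real.sqrt s - 1 / x) ^ 2 - c ^ 2 / (2 * ν * x ^ 2) := by
  have hr := Real.sqrt_pos.mpr hs
  have h2 : s = Real.sqrt s ^ 2 := (Real.sq_sqrt hs.le).symm
  generalize Real.sqrt s = r at *
  subst h2
  field_simp
  ring

/-- Lower bound of the Hamiltonian. -/
lemma aux_H (ν₁ ν₂ μ₁ μ₂ : ℝ) (V : (Fin 3 → ℝ) → ℝ) (z : (Fin 4 → ℝ) × (Fin 4 → ℝ))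
    (hν₁ : 0 < ν₁) (hν₂ : 0 < ν₂) (h2 : 0 < μ₂) (h12 : μ₂ < μ₁)
    (hd : 0 < z.1 0 * z.1 3 - z.1 1 * z.1 2)
    (hL : (z.1 0 * z.2 1 - z.1 1 * z.2 0 + z.1 2 * z.2 3 - z.1 3 * z.2 2) ^ 2 < (μ₁ - μ₂) ^ 2)
    (h6 : μ₁ ^ 2 * (ν₂ * z.1 2 ^ 2 + ν₁ * z.1 0 ^ 2) < μ₂ ^ 2 * (ν₂ * z.1 3 ^ 2 + ν₁ * z.1 1 ^ 2)) :
    (z.2 0 ^ 2 + z.2 1 ^ 2) / (2 * ν₁) + (z.2 2 ^ 2 + z.2 3 ^ 2) / (2 * ν₂) +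
      ((μ₁ ^ 2 * z.1 2 ^ 2 + μ₂ ^ 2 * z.1 3 ^ 2) / (2 * ν₁ * (z.1 0 * z.1 3 - z.1 1 * z.1 2) ^ 2) +
      (μ₁ ^ 2 * z.1 0 ^ 2 + μ₂ ^ 2 * z.1 1 ^ 2) / (2 * ν₂ * (z.1 0 * z.1 3 - z.1 1 * z.1 2) ^ 2)) +
      V ![z.1 0 ^ 2 + z.1 1 ^ 2, z.1 2 ^ 2 + z.1 3 ^ 2, z.1 0 * z.1 2 + z.1 1 * z.1 3] ≤
    Hred ν₁ ν₂ μ₁ μ₂ V z := by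
  simp only [Hred, fred]
  generalize hLL : z.1 0 * z.2 1 - z.1 1 * z.2 0 + z.1 2 * z.2 3 - z.1 3 * z.2 2 = L at *
  have hmom := aux_momentum μ₁ μ₂ L _ _ h2 h12 hL (by positivity) h6
  generalize (Real.sqrt ((μ₁ - μ₂) ^ 2 - L ^ 2) + Real.sqrt ((μ₁ + μ₂) ^ 2 - L ^ 2)) ^ 2 = x at *
  generalize (Real.sqrt ((μ₁ - μ₂) ^ 2 - L ^ 2) - Real.sqrt ((μ₁ + μ₂) ^ 2 - L ^ 2)) ^ 2 = y at *
  generalize z.1 0 * z.1 3 - z.1 1 * z.1 2 = d at *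
  have hdiv := div_le_div_of_nonneg_right hmom (show 0 ≤ 8 * ν₁ * ν₂ * d ^ 2 by positivity)
  have e1 : (4 * μ₁ ^ 2 * (ν₂ * z.1 2 ^ 2 + ν₁ * z.1 0 ^ 2) +
      4 * μ₂ ^ 2 * (ν₂ * z.1 3 ^ 2 + ν₁ * z.1 1 ^ 2)) / (8 * ν₁ * ν₂ * d ^ 2) =
      (μ₁ ^ 2 * z.1 2 ^ 2 + μ₂ ^ 2 * z.1 3 ^ 2) / (2 * ν₁ * d ^ 2) +
      (μ₁ ^ 2 * z.1 0 ^ 2 + μ₂ ^ 2 * z.1 1 ^ 2) / (2 * ν₂ * d ^ 2) := by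
    field_simp
    ring
  have e2 : (x * (ν₂ * z.1 2 ^ 2 + ν₁ * z.1 0 ^ 2) +
      y * (ν₂ * z.1 3 ^ 2 + ν₁ * z.1 1 ^ 2)) / (8 * ν₁ * ν₂ * d ^ 2) =
      1 / (2 * ν₁) * ((x * z.1 2 ^ 2 + y * z.1 3 ^ 2) / (16 * (d / 2) ^ 2)) +
      1 / (2 * ν₂) * ((x * z.1 0 ^ 2 + y * z.1 1 ^ 2) / (16 * (d / 2) ^ 2)) := by
    field_simp
    ring
  rw [e1, e2] at hdiv
  have e3 : (z.2 0 ^ 2 + z.2 1 ^ 2) / (2 * ν₁) = 1 / (2 * ν₁) * (z.2 0 ^ 2 + z.2 1 ^ 2) := by ring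
  have e4 : (z.2 2 ^ 2 + z.2 3 ^ 2) / (2 * ν₂) = 1 / (2 * ν₂) * (z.2 2 ^ 2 + z.2 3 ^ 2) := by ring
  rw [e3, e4]
  linarith

/-- Value of the Hamiltonian at the isosceles point. -/
lemma aux_base (m m₁ ν₁ ν₂ μ₁ μ₂ Q R N : ℝ) (hm : 0 < m) (hν₁ : 0 < ν₁) (hν₂ : 0 < ν₂)
    (h2 : 0 < μ₂) (h12 : μ₂ < μ₁) (hQ : 0 < Q) (hR : 0 < R) (hN : 0 < N)
    (hN2 : N ^ 2 = Q ^ 2 + 4 * R ^ 2) :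
    Hred ν₁ ν₂ μ₁ μ₂ (Vnewt m₁ m m) (![Q, 0, 0, R], (0 : Fin 4 → ℝ)) =
      μ₂ ^ 2 / (2 * ν₁ * Q ^ 2) + μ₁ ^ 2 / (2 * ν₂ * R ^ 2) -
      (m ^ 2 + 4 * (m * m₁) * (Q / N) ^ 3) / Q - 2 * (m * m₁) * (2 * R / N) ^ 3 / R := by
  have hmm : m / (m + m) = 1 / 2 := by field_simp; norm_num
  have hS : (1 / 2 : ℝ) ^ 2 * Q ^ 2 + R ^ 2 = (N / 2) ^ 2 := by
    have h : (N / 2) ^ 2 = N ^ 2 / 4 := by ring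
    rw [h, hN2]; ring
  have hd : Real.sqrt ((μ₁ - μ₂) ^ 2) = μ₁ - μ₂ := Real.sqrt_sq (by linarith)
  have hs : Real.sqrt ((μ₁ + μ₂) ^ 2) = μ₁ + μ₂ := Real.sqrt_sq (by linarith)
  have hq : Real.sqrt (Q ^ 2) = Q := Real.sqrt_sq hQ.le
  have hn : Real.sqrt ((N / 2) ^ 2) = N / 2 := Real.sqrt_sq (by positivity)
  simp only [Hred, fred, Vnewt, hmm, Matrix.cons_val_zero, Matrix.cons_val_one, Matrix.cons_val,
    Pi.zero_apply]
  norm_num only [mul_zero, zero_mul, add_zero, sub_zero, zero_add, zero_pow, ne_eq,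
    OfNat.ofNat_ne_zero, not_false_eq_true]
  norm_num only at hS
  simp only [hS, hd, hs, hq, hn, add_zero, sub_zero, zero_add]
  have e : 4 * (m * m₁) * (Q / N) ^ 3 / Q + 2 * (m * m₁) * (2 * R / N) ^ 3 / R =
    2 * (m * m₁ / (N / 2)) := by
    have : 4 * (m * m₁) * (Q / N) ^ 3 / Q + 2 * (m * m₁) * (2 * R / N) ^ 3 / R =
      4 * (m * m₁) * (Q ^ 2 + 4 * R ^ 2) / N ^ 3 := by field_simp; ring
    rw [this, ← hN2]; field_simp; ring
  have e' : (m ^ 2 + 4 * (m * m₁) * (Q / N) ^ 3) / Q =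
    m * m / Q + 4 * (m * m₁) * (Q / N) ^ 3 / Q := by ring
  have e3 : 1 / (2 * ν₁) * (((μ₁ - μ₂ - (μ₁ + μ₂)) ^ 2 * R ^ 2) / (16 * (Q * R / 2) ^ 2)) =
    μ₂ ^ 2 / (2 * ν₁ * Q ^ 2) := by field_simp; ring
  have e4 : 1 / (2 * ν₂) * (((μ₁ - μ₂ + (μ₁ + μ₂)) ^ 2 * Q ^ 2) / (16 * (Q * R / 2) ^ 2)) =
    μ₁ ^ 2 / (2 * ν₂ * R ^ 2) := by field_simp; ring
  have e5 : m₁ * m / (N / 2) = m * m₁ / (N / 2) := by ring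
  rw [e', e3, e4, e5]
  linarith

lemma aux_min (m m₁ ν₁ ν₂ μ₁ μ₂ Q R N : ℝ) (hm : 0 < m) (hm₁ : 0 < m₁)
    (hν₁ : 0 < ν₁) (hν₂ : 0 < ν₂)
    (h2 : 0 < μ₂) (h12 : μ₂ < μ₁) (hQ : 0 < Q) (hR : 0 < R) (hN : 0 < N)
    (hN2 : N ^ 2 = Q ^ 2 + 4 * R ^ 2)
    (E1 : m ^ 2 + 4 * (m * m₁) * (Q / N) ^ 3 = μ₂ ^ 2 / (ν₁ * Q))
    (E2 : 2 * (m * m₁) * (2 * R / N) ^ 3 = μ₁ ^ 2 / (ν₂ * R))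
    (h6 : μ₁ ^ 2 * (ν₁ * Q ^ 2) < μ₂ ^ 2 * (ν₂ * R ^ 2))
    (h7 : 2 * ν₁ * Q ^ 2 < ν₂ * R ^ 2)
    (h8 : 0 < μ₂ ^ 2 * ν₂ * R ^ 5 - 2 * (μ₁ ^ 2 - μ₂ ^ 2) * ν₁ * Q ^ 2 * R ^ 3 -
      2 * ν₁ * ν₂ * (m * m₁) * (Q * R) ^ 2 * Q ^ 2) :
    ∀ᶠ z in nhdsWithin ((![Q, 0, 0, R], (0 : Fin 4 → ℝ))) {((![Q, 0, 0, R], (0 : Fin 4 → ℝ)))}ᶜ,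
      Hred ν₁ ν₂ μ₁ μ₂ (Vnewt m₁ m m) (![Q, 0, 0, R], (0 : Fin 4 → ℝ)) <
        Hred ν₁ ν₂ μ₁ μ₂ (Vnewt m₁ m m) z := by
  have key : ∀ g : (Fin 4 → ℝ) × (Fin 4 → ℝ) → ℝ, Continuous g →
      0 < g (![Q, 0, 0, R], (0 : Fin 4 → ℝ)) →
      ∀ᶠ z in nhdsWithin ((![Q, 0, 0, R], (0 : Fin 4 → ℝ)))
        {((![Q, 0, 0, R], (0 : Fin 4 → ℝ)))}ᶜ, 0 < g z := by
    intro g hg h0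
    exact nhdsWithin_le_nhds (hg.continuousAt.eventually (lt_mem_nhds h0))
  have c1 := key (fun z => z.1 0) (by fun_prop) (by simpa using hQ)
  have c2 := key (fun z => z.1 3) (by fun_prop) (by simpa using hR)
  have c3 := key (fun z => z.1 0 * z.1 3 - z.1 1 * z.1 2) (by fun_prop)
    (by simpa using mul_pos hQ hR)
  have c4 := key (fun z => ((z.1 0 ^ 2 + z.1 1 ^ 2) / 4 + (z.1 2 ^ 2 + z.1 3 ^ 2)) -
    4 * (z.1 0 * z.1 2 + z.1 1 * z.1 3)) (by fun_prop) (by simp; positivity)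
  have c5 := key (fun z => ((z.1 0 ^ 2 + z.1 1 ^ 2) / 4 + (z.1 2 ^ 2 + z.1 3 ^ 2)) +
    4 * (z.1 0 * z.1 2 + z.1 1 * z.1 3)) (by fun_prop) (by simp; positivity)
  have c6 := key (fun z => (μ₁ - μ₂) ^ 2 -
    (z.1 0 * z.2 1 - z.1 1 * z.2 0 + z.1 2 * z.2 3 - z.1 3 * z.2 2) ^ 2) (by fun_prop)
    (by simp; exact pow_pos (sub_pos.mpr h12) 2)
  have c7 := key (fun z => μ₂ ^ 2 * (ν₂ * z.1 3 ^ 2 + ν₁ * z.1 1 ^ 2) -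
    μ₁ ^ 2 * (ν₂ * z.1 2 ^ 2 + ν₁ * z.1 0 ^ 2)) (by fun_prop) (by simp; exact h6)
  have c8 := key (fun z => ν₂ * z.1 3 ^ 2 - 2 * ν₁ * z.1 0 ^ 2) (by fun_prop)
    (by simpa using h7)
  have c9 := key (fun z => μ₂ ^ 2 * ν₂ * z.1 3 ^ 5 -
      2 * (μ₁ ^ 2 - μ₂ ^ 2) * ν₁ * (z.1 0 ^ 2 + z.1 1 ^ 2) * z.1 3 ^ 3 -
      2 * ν₁ * ν₂ * (m * m₁) * (z.1 0 * z.1 3 - z.1 1 * z.1 2) ^ 2 *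
        (z.1 0 ^ 2 + z.1 1 ^ 2)) (by fun_prop)
    (by
      have e : (![Q, 0, 0, R] : Fin 4 → ℝ) 0 = Q ∧ (![Q, 0, 0, R] : Fin 4 → ℝ) 1 = 0 ∧
        (![Q, 0, 0, R] : Fin 4 → ℝ) 2 = 0 ∧ (![Q, 0, 0, R] : Fin 4 → ℝ) 3 = R := by simp
      simp only [e.1, e.2.1, e.2.2.1, e.2.2.2]
      convert h8 using 1
      ring)
  filter_upwards [c1, c2, c3, c4, c5, c6, c7, c8, c9, self_mem_nhdsWithin]
    with z c1 c2 c3 c4 c5 c6 c7 c8 c9 hz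
  have hH := aux_H ν₁ ν₂ μ₁ μ₂ (Vnewt m₁ m m) z hν₁ hν₂ h2 h12 c3 (by linarith) (by linarith)
  have hpot := aux_pot m m₁ (Q / N) (2 * R / N) (z.1 0) (z.1 1) (z.1 2) (z.1 3) hm hm₁
    (by positivity) (by positivity) (by field_simp; linarith) c1 c2 (by linarith) (by linarith)
  obtain ⟨k₁, hk₁, k₂, hk₂, hkin⟩ := aux_kin μ₁ μ₂ ν₁ ν₂ (m * m₁) (z.1 0) (z.1 1) (z.1 2) (z.1 3)
    hν₁ hν₂ h2 h12 c1 c2 c3 (by linarith) c9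
  rw [aux_base m m₁ ν₁ ν₂ μ₁ μ₂ Q R N hm hν₁ hν₂ h2 h12 hQ hR hN hN2]
  rw [E1, E2] at hpot ⊢
  have s1p : 0 < z.1 0 ^ 2 + z.1 1 ^ 2 := by positivity
  have s2p : 0 < z.1 2 ^ 2 + z.1 3 ^ 2 := by positivity
  have i1 := aux_sq_id μ₂ ν₁ (z.1 0 ^ 2 + z.1 1 ^ 2) Q hν₁ s1p hQ
  have i2 := aux_sq_id μ₁ ν₂ (z.1 2 ^ 2 + z.1 3 ^ 2) R hν₂ s2p hR
  have b1 : μ₂ ^ 2 / (ν₁ * Q) / Q = 2 * (μ₂ ^ 2 / (2 * ν₁ * Q ^ 2)) := by field_simp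
  have b2 : μ₁ ^ 2 / (ν₂ * R) / R = 2 * (μ₁ ^ 2 / (2 * ν₂ * R ^ 2)) := by field_simp
  rw [b1, b2]
  rw [neg_div] at i2
  have hμ₁ : 0 < μ₁ := h2.trans h12
  by_contra hcon
  push Not at hcon
  have n1 : 0 ≤ (z.2 0 ^ 2 + z.2 1 ^ 2) / (2 * ν₁) := by positivity
  have n2 : 0 ≤ (z.2 2 ^ 2 + z.2 3 ^ 2) / (2 * ν₂) := by positivity
  have n3 : 0 ≤ μ₂ ^ 2 / (2 * ν₁) * (1 / Real.sqrt (z.1 0 ^ 2 + z.1 1 ^ 2) - 1 / Q) ^ 2 := by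
    positivity
  have n4 : 0 ≤ μ₁ ^ 2 / (2 * ν₂) * (1 / Real.sqrt (z.1 2 ^ 2 + z.1 3 ^ 2) - 1 / R) ^ 2 := by
    positivity
  have n5 : 0 ≤ k₁ * z.1 2 ^ 2 := by positivity
  have n6 : 0 ≤ k₂ * (z.1 0 * z.1 2 + z.1 1 * z.1 3) ^ 2 := by positivity
  have z1 : (z.2 0 ^ 2 + z.2 1 ^ 2) / (2 * ν₁) = 0 := by linarith
  have z2 : (z.2 2 ^ 2 + z.2 3 ^ 2) / (2 * ν₂) = 0 := by linarith
  have z3 : μ₂ ^ 2 / (2 * ν₁) * (1 / Real.sqrt (z.1 0 ^ 2 + z.1 1 ^ 2) - 1 / Q) ^ 2 = 0 := by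
    linarith
  have z4 : μ₁ ^ 2 / (2 * ν₂) * (1 / Real.sqrt (z.1 2 ^ 2 + z.1 3 ^ 2) - 1 / R) ^ 2 = 0 := by
    linarith
  have z5 : k₁ * z.1 2 ^ 2 = 0 := by linarith
  have z6 : k₂ * (z.1 0 * z.1 2 + z.1 1 * z.1 3) ^ 2 = 0 := by linarith
  have y5 : z.1 2 = 0 := by simpa [hk₁.ne'] using z5
  have y6 : z.1 1 = 0 := by simpa [hk₂.ne', y5, c2.ne'] using z6
  have y3 : z.1 0 = Q := by
    have : μ₂ ^ 2 / (2 * ν₁) ≠ 0 := by positivity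
    have := pow_eq_zero_iff (two_ne_zero) |>.mp ((mul_eq_zero.mp z3).resolve_left this)
    rw [y6, zero_pow two_ne_zero, add_zero, Real.sqrt_sq c1.le, sub_eq_zero] at this
    simpa using this
  have y4 : z.1 3 = R := by
    have : μ₁ ^ 2 / (2 * ν₂) ≠ 0 := by positivity
    have := pow_eq_zero_iff (two_ne_zero) |>.mp ((mul_eq_zero.mp z4).resolve_left this)
    rw [y5, zero_pow two_ne_zero, zero_add, Real.sqrt_sq c2.le, sub_eq_zero] at this
    simpa using this
  have y1 : z.2 0 ^ 2 + z.2 1 ^ 2 = 0 := by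
    rcases div_eq_zero_iff.mp z1 with h | h
    · exact h
    · linarith
  have y2 : z.2 2 ^ 2 + z.2 3 ^ 2 = 0 := by
    rcases div_eq_zero_iff.mp z2 with h | h
    · exact h
    · linarith
  have x0 : z.2 0 = 0 := aux_sum_sq _ _ y1
  have x1 : z.2 1 = 0 := aux_sum_sq _ _ (by rw [add_comm]; exact y1)
  have x2 : z.2 2 = 0 := aux_sum_sq _ _ y2
  have x3 : z.2 3 = 0 := aux_sum_sq _ _ (by rw [add_comm]; exact y2)
  apply hz
  rw [Set.mem_singleton_iff]
  apply Prod.ext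
  · funext i
    fin_cases i <;> simp [y3, y4, y5, y6]
  · funext i
    fin_cases i <;> simp [x0, x1, x2, x3]

/-- Existence of the equilibrium with a prescribed smallness of `τ = q₁/q₄`. -/
lemma aux_exist (m k c τ₁ : ℝ) (hm : 0 < m) (hk : 0 < k) (hc : 0 < c) (hτ : 0 < τ₁) :
    ∃ δ > 0, ∀ y ∈ Set.Ioo 0 δ, ∃ τ ∈ Set.Ioo 0 τ₁,
      c * τ * (m ^ 2 * Real.sqrt (τ ^ 2 + 4) ^ 3 + 4 * k * τ ^ 3) = y := by
  have hcont : Continuous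
      (fun τ : ℝ => c * τ * (m ^ 2 * Real.sqrt (τ ^ 2 + 4) ^ 3 + 4 * k * τ ^ 3)) := by fun_prop
  refine ⟨c * τ₁ * (m ^ 2 * Real.sqrt (τ₁ ^ 2 + 4) ^ 3 + 4 * k * τ₁ ^ 3), by positivity, ?_⟩
  intro y hy
  have := intermediate_value_Ioo hτ.le hcont.continuousOn
  obtain ⟨τ, h1, h2⟩ := this (show y ∈ _ by simpa using hy)
  exact ⟨τ, h1, h2⟩

theorem isosceles_minimum_small_mu2 (m m₁ μ₁ : ℝ) (hm : 0 < m) (hm₁ : 0 < m₁)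
    (hμ₁ : 0 < μ₁) :
    ∃ ε > 0, ∀ μ₂ : ℝ, μ₂ ∈ Set.Ioo 0 ε →
      ∃ q₁ q₄ : ℝ, 0 < q₁ ∧ 0 < q₄ ∧
        m ^ 2 / q₁ ^ 2 + 4 * m * m₁ * q₁ / (q₁ ^ 2 + 4 * q₄ ^ 2) ^ ((3 : ℝ) / 2) -
          μ₂ ^ 2 / ((m / 2) * q₁ ^ 3) = 0 ∧
        16 * m * m₁ * q₄ / (q₁ ^ 2 + 4 * q₄ ^ 2) ^ ((3 : ℝ) / 2) -
          μ₁ ^ 2 / ((2 * m * m₁ / (2 * m + m₁)) * q₄ ^ 3) = 0 ∧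
        (∀ᶠ z in nhdsWithin ((![q₁, 0, 0, q₄], (0 : Fin 4 → ℝ)))
            {((![q₁, 0, 0, q₄], (0 : Fin 4 → ℝ)))}ᶜ,
          Hred (m / 2) (2 * m * m₁ / (2 * m + m₁)) μ₁ μ₂ (Vnewt m₁ m m)
              (![q₁, 0, 0, q₄], (0 : Fin 4 → ℝ)) <
            Hred (m / 2) (2 * m * m₁ / (2 * m + m₁)) μ₁ μ₂ (Vnewt m₁ m m) z) := by
  have hν₁ : 0 < m / 2 := by positivity
  have hν₂ : 0 < 2 * m * m₁ / (2 * m + m₁) := by positivity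
  generalize m / 2 = ν₁ at *
  generalize 2 * m * m₁ / (2 * m + m₁) = ν₂ at *
  have hk : 0 < m * m₁ := by positivity
  obtain ⟨τ₁, hτ₁, t1, t2, t3⟩ : ∃ τ₁ : ℝ, 0 < τ₁ ∧ τ₁ ≤ 1 ∧ 8 * (m * m₁) * τ₁ ≤ m ^ 2 ∧
      2 * ν₁ * τ₁ ≤ ν₂ := by
    refine ⟨min 1 (min (m ^ 2 / (8 * (m * m₁))) (ν₂ / (2 * ν₁))), by positivity,
      min_le_left _ _, ?_, ?_⟩
    · have : min 1 (min (m ^ 2 / (8 * (m * m₁))) (ν₂ / (2 * ν₁))) ≤ m ^ 2 / (8 * (m * m₁)) :=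
        (min_le_right _ _).trans (min_le_left _ _)
      rw [le_div_iff₀ (by positivity)] at this
      linarith
    · have : min 1 (min (m ^ 2 / (8 * (m * m₁))) (ν₂ / (2 * ν₁))) ≤ ν₂ / (2 * ν₁) :=
        (min_le_right _ _).trans (min_le_right _ _)
      rw [le_div_iff₀ (by positivity)] at this
      linarith
  have hc : 0 < μ₁ ^ 2 / (16 * (m * m₁) * ν₂) := by positivity
  obtain ⟨δ, hδ, hex⟩ := aux_exist m (m * m₁) (μ₁ ^ 2 / (16 * (m * m₁) * ν₂)) τ₁ hm hk hc hτ₁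
  refine ⟨min μ₁ (Real.sqrt (ν₁ * δ)), by positivity, ?_⟩
  rintro μ₂ ⟨h2, hlt⟩
  have h12 : μ₂ < μ₁ := lt_of_lt_of_le hlt (min_le_left _ _)
  have hμδ : μ₂ ^ 2 / ν₁ < δ := by
    have : μ₂ < Real.sqrt (ν₁ * δ) := lt_of_lt_of_le hlt (min_le_right _ _)
    rw [Real.lt_sqrt h2.le] at this
    rw [div_lt_iff₀ hν₁]
    linarith
  obtain ⟨τ, ⟨hτ0, hτlt⟩, heq⟩ := hex (μ₂ ^ 2 / ν₁) ⟨by positivity, hμδ⟩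
  set n := Real.sqrt (τ ^ 2 + 4) with hn
  have hnp : 0 < n := Real.sqrt_pos.mpr (by positivity)
  have hn2 : n ^ 2 = τ ^ 2 + 4 := Real.sq_sqrt (by positivity)
  have hnge : 2 ≤ n := by
    apply Real.le_sqrt_of_sq_le
    have := sq_nonneg τ
    linarith
  obtain ⟨R, hRdef⟩ : ∃ R, R = μ₁ ^ 2 / (16 * (m * m₁) * ν₂) * n ^ 3 := ⟨_, rfl⟩
  have hR : 0 < R := by rw [hRdef]; positivity
  have hμ1R : μ₁ ^ 2 * n ^ 3 = 16 * (m * m₁) * ν₂ * R := by rw [hRdef]; field_simp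
  have hμ2R : μ₂ ^ 2 * n ^ 3 = ν₁ * τ * R * (m ^ 2 * n ^ 3 + 4 * (m * m₁) * τ ^ 3) := by
    have : μ₂ ^ 2 = ν₁ * (μ₁ ^ 2 / (16 * (m * m₁) * ν₂) * τ *
      (m ^ 2 * n ^ 3 + 4 * (m * m₁) * τ ^ 3)) := by rw [heq]; field_simp
    rw [this, hRdef]; ring
  have hN2 : (n * R) ^ 2 = (τ * R) ^ 2 + 4 * R ^ 2 := by rw [mul_pow, hn2]; ring
  have hrpow : ((τ * R) ^ 2 + 4 * R ^ 2) ^ ((3 : ℝ) / 2) = (n * R) ^ 3 := by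
    rw [← hN2, ← Real.rpow_natCast (n * R) 2, ← Real.rpow_mul (by positivity),
      ← Real.rpow_natCast (n * R) 3]
    norm_num
  have E1 : m ^ 2 + 4 * (m * m₁) * (τ * R / (n * R)) ^ 3 = μ₂ ^ 2 / (ν₁ * (τ * R)) := by
    field_simp
    linarith
  have E2 : 2 * (m * m₁) * (2 * R / (n * R)) ^ 3 = μ₁ ^ 2 / (ν₂ * R) := by
    field_simp
    linarith
  have n3 : 8 ≤ n ^ 3 := by
    have := pow_le_pow_left₀ (by norm_num) hnge 3
    linarith
  have B1 : μ₁ ^ 2 ≤ 2 * (m * m₁) * ν₂ * R := by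
    have := mul_le_mul_of_nonneg_left n3 (sq_nonneg μ₁)
    linarith
  have B2 : ν₁ * τ * R * m ^ 2 ≤ μ₂ ^ 2 := by
    have : 0 ≤ ν₁ * τ * R * (4 * (m * m₁) * τ ^ 3) := by positivity
    have h3 : ν₁ * τ * R * m ^ 2 * n ^ 3 ≤ μ₂ ^ 2 * n ^ 3 := by rw [hμ2R]; linarith
    exact le_of_mul_le_mul_right h3 (by positivity)
  have tm : 8 * (m * m₁) * τ < m ^ 2 :=
    lt_of_lt_of_le (mul_lt_mul_of_pos_left hτlt (by positivity)) t2
  have tτ : τ < 1 := by linarith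
  have tν : 2 * ν₁ * τ < ν₂ :=
    lt_of_lt_of_le (mul_lt_mul_of_pos_left hτlt (by positivity)) t3
  have tsq : τ ^ 2 ≤ 1 := pow_le_one₀ hτ0.le tτ.le
  have tsq' : τ ^ 2 ≤ τ := by
    have := mul_le_mul_of_nonneg_left tτ.le hτ0.le
    linarith
  refine ⟨τ * R, R, by positivity, hR, ?_, ?_, ?_⟩
  · rw [hrpow]
    have e : m ^ 2 / (τ * R) ^ 2 + 4 * m * m₁ * (τ * R) / (n * R) ^ 3 -
        μ₂ ^ 2 / (ν₁ * (τ * R) ^ 3) =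
        ((m ^ 2 + 4 * (m * m₁) * (τ * R / (n * R)) ^ 3) - μ₂ ^ 2 / (ν₁ * (τ * R))) /
          (τ * R) ^ 2 := by
      field_simp
    rw [e, E1, sub_self, zero_div]
  · rw [hrpow]
    have e : 16 * m * m₁ * R / (n * R) ^ 3 - μ₁ ^ 2 / (ν₂ * R ^ 3) =
        (2 * (m * m₁) * (2 * R / (n * R)) ^ 3 - μ₁ ^ 2 / (ν₂ * R)) / R ^ 2 := by
      field_simp
      ring
    rw [e, E2, sub_self, zero_div]
  · refine aux_min m m₁ ν₁ ν₂ μ₁ μ₂ (τ * R) R (n * R) hm hm₁ hν₁ hν₂ h2 h12 (by positivity) hR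
      (by positivity) hN2 E1 E2 ?_ ?_ ?_
    · calc μ₁ ^ 2 * (ν₁ * (τ * R) ^ 2) ≤ 2 * (m * m₁) * ν₂ * R * (ν₁ * (τ * R) ^ 2) := by gcongr
        _ = (2 * (m * m₁) * τ) * (ν₁ * ν₂ * τ * R ^ 3) := by ring
        _ < m ^ 2 * (ν₁ * ν₂ * τ * R ^ 3) := by
          apply mul_lt_mul_of_pos_right _ (by positivity)
          have : 0 < m * m₁ * τ := by positivity
          linarith
        _ = ν₁ * τ * R * m ^ 2 * (ν₂ * R ^ 2) := by ring
        _ ≤ μ₂ ^ 2 * (ν₂ * R ^ 2) := by gcongr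
    · have : 2 * ν₁ * τ ^ 2 < ν₂ := by
        have := mul_le_mul_of_nonneg_left tsq' (show 0 ≤ 2 * ν₁ by positivity)
        linarith
      calc 2 * ν₁ * (τ * R) ^ 2 = 2 * ν₁ * τ ^ 2 * R ^ 2 := by ring
        _ < ν₂ * R ^ 2 := by gcongr
    · have a1 : ν₁ * τ * R * m ^ 2 * (ν₂ * R ^ 5) ≤ μ₂ ^ 2 * (ν₂ * R ^ 5) := by gcongr
      have a2 : (μ₁ ^ 2 - μ₂ ^ 2) * (2 * ν₁ * (τ * R) ^ 2 * R ^ 3) ≤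
          2 * (m * m₁) * ν₂ * R * (2 * ν₁ * (τ * R) ^ 2 * R ^ 3) := by
        gcongr
        have := sq_nonneg μ₂
        linarith
      have a3 : τ ^ 2 * (2 * ν₁ * ν₂ * (m * m₁) * τ ^ 2 * R ^ 6) ≤
          1 * (2 * ν₁ * ν₂ * (m * m₁) * τ ^ 2 * R ^ 6) := by
        gcongr
      have a4 : 8 * (m * m₁) * τ * (ν₁ * ν₂ * τ * R ^ 6) < m ^ 2 * (ν₁ * ν₂ * τ * R ^ 6) := by
        gcongr
      have a5 : 0 < m * m₁ * τ * (ν₁ * ν₂ * τ * R ^ 6) := by positivity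
      linarith

end
end

section
/- Let m₂ = m₃ = m > 0, m₁ > 0, μ₁ > μ₂ > 0, and let z* be a point with positions (q₁, 0, 0, q₄), q₁, q₄ > 0, and all momenta zero. Then the Hessian of the fully reduced Hamiltonian H at z* is block diagonal with respect to the grouping {q₂,q₃}, {q₁,q₄}, {p₂,p₃}, {p₁}, {p₄} (all mixed second derivatives between different groups vanish), with ∂²H/∂p₁² = 1/ν₁, ∂²H/∂p₄² = 1/ν₂, and with the three 2×2 blocks: ∂²H/∂(q₂,q₃)² = [[μ₂²/(ν₂q₁²q₄²) + m²/q₁³ + 4mm₁(q₁²−8q₄²)/(q₁²+4q₄²)^{5/2}, μ₁²/(ν₂q₁q₄³) + μ₂²/(ν₁q₁³q₄) − 48mm₁q₁q₄/(q₁²+4q₄²)^{5/2}], [same off-diagonal entry, μ₁²/(ν₁q₁²q₄²) − 32mm₁(q₁²−2q₄²)/(q₁²+4q₄²)^{5/2}]]; ∂²H/∂(q₁,q₄)² = [[3μ₂²/(ν₁q₁⁴) − 2m²/q₁³ − 8mm₁(q₁²−2q₄²)/(q₁²+4q₄²)^{5/2}, −48mm₁q₁q₄/(q₁²+4q₄²)^{5/2}],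 [same off-diagonal entry, 3μ₁²/(ν₂q₄⁴) + 16mm₁(q₁²−8q₄²)/(q₁²+4q₄²)^{5/2}]]; ∂²H/∂(p₂,p₃)² = (1/(μ₁²−μ₂²))·[[μ₁²(1/ν₁ − q₁²/(ν₂q₄²)), μ₁²q₁/(ν₂q₄) − μ₂²q₄/(ν₁q₁)], [same off-diagonal entry, μ₂²(q₄²/(ν₁q₁²) − 1/ν₂)]]. -/
noncomputable section

/-- Phase space of the fully reduced Hamiltonian. -/
abbrev PS := (Fin 4 → ℝ) × (Fin 4 → ℝ)

/-- Basis vector in the `q_i` direction. -/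
def eQ (i : Fin 4) : PS := (Pi.single i 1, 0)

/-- Basis vector in the `p_i` direction. -/
def eP (i : Fin 4) : PS := ((0 : Fin 4 → ℝ), Pi.single i 1)

/-- Second directional derivative (Hessian bilinear form). -/
def D2 (H : PS → ℝ) (z u v : PS) : ℝ :=
  fderiv ℝ (fun w => fderiv ℝ H w v) z u

/-- The basis `(q₁,q₂,q₃,q₄,p₁,p₂,p₃,p₄)` of the phase space. -/
def bvec : Fin 8 → PS := ![eQ 0, eQ 1, eQ 2, eQ 3, eP 0, eP 1, eP 2, eP 3]

/-- Group assignment: `{q₂,q₃} ↦ 0`, `{q₁,q₄} ↦ 1`, `{p₂,p₃} ↦ 2`, `{p₁} ↦ 3`,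
`{p₄} ↦ 4`. -/
def grp : Fin 8 → Fin 5 := ![1, 0, 0, 1, 3, 2, 2, 4]

/-- Second order jet of a function of one variable at `0`: value, first and second derivative. -/
def Jet (f : ℝ → ℝ) (a b c : ℝ) : Prop :=
  f 0 = a ∧ ∃ g : ℝ → ℝ, (∀ᶠ t in nhds (0 : ℝ), HasDerivAt f (g t) t) ∧ g 0 = b ∧
    HasDerivAt g c 0

lemma Jet.cast {f : ℝ → ℝ} {a b c a' b' c' : ℝ} (h : Jet f a b c) (ha : a = a') (hb : b = b')
    (hc : c = c') : Jet f a' b' c' := by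
  subst ha hb hc; exact h

lemma Jet.congr {f g : ℝ → ℝ} {a b c : ℝ} (h : Jet f a b c) (hfg : ∀ t, g t = f t) :
    Jet g a b c := by
  have : g = f := funext hfg
  rw [this]; exact h

lemma Jet.const (k : ℝ) : Jet (fun _ => k) k 0 0 :=
  ⟨rfl, fun _ => 0, Filter.Eventually.of_forall fun t => hasDerivAt_const t k, rfl,
    hasDerivAt_const 0 0⟩

lemma Jet.affine (x y : ℝ) : Jet (fun t => x + t * y) x y 0 := by
  refine ⟨by simp, fun _ => y, Filter.Eventually.of_forall fun t => ?_, rfl, hasDerivAt_const 0 y⟩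
  simpa using ((hasDerivAt_id t).mul_const y).const_add x

lemma Jet.add {f g : ℝ → ℝ} {a b c a' b' c' : ℝ} (hf : Jet f a b c) (hg : Jet g a' b' c') :
    Jet (fun t => f t + g t) (a + a') (b + b') (c + c') := by
  obtain ⟨h0, f1, hf1, h1, h2⟩ := hf
  obtain ⟨k0, g1, hg1, k1, k2⟩ := hg
  refine ⟨by simp [h0, k0], fun t => f1 t + g1 t, ?_, by simp [h1, k1], h2.add k2⟩
  filter_upwards [hf1, hg1] with t ht ht'
  exact ht.add ht'

lemma Jet.mul {f g : ℝ → ℝ} {a b c a' b' c' : ℝ} (hf : Jet f a b c) (hg : Jet g a' b' c') :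
    Jet (fun t => f t * g t) (a * a') (b * a' + a * b') (c * a' + 2 * b * b' + a * c') := by
  obtain ⟨h0, f1, hf1, h1, h2⟩ := hf
  obtain ⟨k0, g1, hg1, k1, k2⟩ := hg
  refine ⟨by simp [h0, k0], fun t => f1 t * g t + f t * g1 t, ?_, by simp [h0, h1, k0, k1], ?_⟩
  · filter_upwards [hf1, hg1] with t ht ht'
    exact ht.mul ht'
  · refine ((h2.mul hg1.self_of_nhds).add (hf1.self_of_nhds.mul k2)).congr_deriv ?_
    rw [h0, h1, k0, k1]; ring

lemma Jet.comp {f : ℝ → ℝ} {a b c : ℝ} (hf : Jet f a b c) {φ φ1 : ℝ → ℝ} {φ2 : ℝ}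
    (h1 : ∀ᶠ x in nhds a, HasDerivAt φ (φ1 x) x) (h2 : HasDerivAt φ1 φ2 a) :
    Jet (fun t => φ (f t)) (φ a) (φ1 a * b) (φ2 * b ^ 2 + φ1 a * c) := by
  obtain ⟨e0, f1, hf1, e1, e2⟩ := hf
  have hd := hf1.self_of_nhds
  have hc : Filter.Tendsto f (nhds 0) (nhds a) := by
    have := hd.continuousAt.tendsto
    rwa [e0] at this
  refine ⟨by simp [e0], fun t => φ1 (f t) * f1 t, ?_, by simp [e0, e1], ?_⟩
  · filter_upwards [hf1, hc.eventually h1] with t ht ht'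
    exact ht'.comp t ht
  · have h2' : HasDerivAt φ1 φ2 (f 0) := by rw [e0]; exact h2
    refine ((h2'.comp (0 : ℝ) hd).mul e2).congr_deriv ?_
    simp only [Function.comp, e0, e1]; ring

lemma Jet.inv {f : ℝ → ℝ} {a b c : ℝ} (hf : Jet f a b c) (ha : a ≠ 0) :
    Jet (fun t => (f t)⁻¹) a⁻¹ (-b / a ^ 2) (-c / a ^ 2 + 2 * b ^ 2 / a ^ 3) := by
  have h1 : ∀ᶠ x in nhds a, HasDerivAt (fun x : ℝ => x⁻¹) (-(x ^ 2)⁻¹) x := by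
    filter_upwards [isOpen_ne.mem_nhds ha] with x hx
    exact hasDerivAt_inv hx
  have h2 : HasDerivAt (fun x : ℝ => -(x ^ 2)⁻¹) (2 / a ^ 3) a := by
    refine (((hasDerivAt_pow 2 a).inv (pow_ne_zero 2 ha)).neg).congr_deriv ?_
    simp; field_simp
  refine (hf.comp h1 h2).cast rfl ?_ ?_
  · field_simp
  · field_simp; ring

lemma Jet.sqrt {f : ℝ → ℝ} {r b c : ℝ} (hf : Jet f (r ^ 2) b c) (hr : 0 < r) :
    Jet (fun t => Real.sqrt (f t)) r (b / (2 * r)) (c / (2 * r) - b ^ 2 / (4 * r ^ 3)) := by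
  have hr2 : (r ^ 2 : ℝ) ≠ 0 := by positivity
  have hs : Real.sqrt (r ^ 2) = r := Real.sqrt_sq hr.le
  have h1 : ∀ᶠ x in nhds (r ^ 2), HasDerivAt Real.sqrt (1 / (2 * Real.sqrt x)) x := by
    filter_upwards [isOpen_ne.mem_nhds hr2] with x hx
    exact Real.hasDerivAt_sqrt hx
  have h2 : HasDerivAt (fun x : ℝ => 1 / (2 * Real.sqrt x)) (-1 / (4 * r ^ 3)) (r ^ 2) := by
    have hne : 2 * Real.sqrt (r ^ 2) ≠ 0 := by rw [hs]; positivity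
    refine ((hasDerivAt_const (r ^ 2) (1 : ℝ)).div
      ((Real.hasDerivAt_sqrt hr2).const_mul 2) hne).congr_deriv ?_
    rw [hs]; field_simp; norm_num
  refine (hf.comp h1 h2).cast hs ?_ ?_
  · rw [hs]; field_simp
  · rw [hs]; field_simp; ring

lemma D2_diag_of_jet {H : PS → ℝ} {z u : PS} (hH : ContDiffAt ℝ 2 H z) {a b c : ℝ}
    (hj : Jet (fun t : ℝ => H (z + t • u)) a b c) : D2 H z u u = c := by
  obtain ⟨-, g, hg, -, hc⟩ := hj
  have hline : ∀ t : ℝ, HasDerivAt (fun t : ℝ => z + t • u) u t := fun t => by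
    simpa using ((hasDerivAt_id t).smul_const u).const_add z
  have hz : z + (0 : ℝ) • u = z := by simp
  have hcont : Filter.Tendsto (fun t : ℝ => z + t • u) (nhds 0) (nhds z) := by
    have := (hline 0).continuousAt.tendsto
    rwa [hz] at this
  have hdiff : ∀ᶠ w in nhds z, DifferentiableAt ℝ H w := by
    have := hH.eventually (by simp)
    filter_upwards [this] with w hw
    exact hw.differentiableAt (by simp)
  have hev : g =ᶠ[nhds 0] fun t => fderiv ℝ H (z + t • u) u := by
    filter_upwards [hg, hcont.eventually hdiff] with t h1 h2
    exact h1.unique (h2.hasFDerivAt.comp_hasDerivAt t (hline t))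
  have hD : DifferentiableAt ℝ (fderiv ℝ H) z :=
    (hH.fderiv_right (m := 1) (by norm_num)).differentiableAt (by simp)
  have hD' : HasFDerivAt (fun w => fderiv ℝ H w u) (fderiv ℝ (fun w => fderiv ℝ H w u) z)
      (z + (0 : ℝ) • u) := by
    rw [hz]
    exact (hD.clm_apply (differentiableAt_const u)).hasFDerivAt
  have h3 := hD'.comp_hasDerivAt (0 : ℝ) (hline 0)
  exact h3.unique (hc.congr_of_eventuallyEq hev.symm)

lemma D2_eq {H : PS → ℝ} {z : PS} (hH : ContDiffAt ℝ 2 H z) (u v : PS) :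
    D2 H z u v = fderiv ℝ (fderiv ℝ H) z u v := by
  have hD : DifferentiableAt ℝ (fderiv ℝ H) z :=
    (hH.fderiv_right (m := 1) (by norm_num)).differentiableAt (by simp)
  unfold D2
  rw [fderiv_clm_apply hD (differentiableAt_const v)]
  simp

lemma D2_polar {H : PS → ℝ} {z : PS} (hH : ContDiffAt ℝ 2 H z) (u v : PS) :
    D2 H z u v = (D2 H z (u + v) (u + v) - D2 H z u u - D2 H z v v) / 2 := by
  have hs : fderiv ℝ (fderiv ℝ H) z u v = fderiv ℝ (fderiv ℝ H) z v u :=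
    (hH.isSymmSndFDerivAt (by simp)) u v
  simp only [D2_eq hH, map_add, add_apply]
  rw [← hs]; ring

lemma jet_fred {A qi qj L : ℝ → ℝ} {μ₁ μ₂ A0 A1 A2 i0 i1 i2 j0 j1 j2 L1 L2 : ℝ}
    (hμ : μ₁ > μ₂) (hμ₂ : 0 < μ₂) (hA : Jet A A0 A1 A2) (hi : Jet qi i0 i1 i2)
    (hj : Jet qj j0 j1 j2) (hL : Jet L 0 L1 L2) (hA0 : A0 ≠ 0) :
    Jet (fun t => fred μ₁ μ₂ (A t) (qi t) (qj t) (L t))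
      ((μ₁ ^ 2 * i0 ^ 2 + μ₂ ^ 2 * j0 ^ 2) / (4 * A0 ^ 2))
      ((μ₁ ^ 2 * (2 * i0 * i1) + μ₂ ^ 2 * (2 * j0 * j1)) / (4 * A0 ^ 2)
        - (μ₁ ^ 2 * i0 ^ 2 + μ₂ ^ 2 * j0 ^ 2) * A1 / (2 * A0 ^ 3))
      ((μ₁ ^ 2 * (2 * i1 ^ 2 + 2 * i0 * i2) + μ₂ ^ 2 * (2 * j1 ^ 2 + 2 * j0 * j2)
          + 2 * L1 ^ 2 * (μ₂ ^ 2 * j0 ^ 2 - μ₁ ^ 2 * i0 ^ 2) / (μ₁ ^ 2 - μ₂ ^ 2)) / (4 * A0 ^ 2)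
        - (μ₁ ^ 2 * (2 * i0 * i1) + μ₂ ^ 2 * (2 * j0 * j1)) * A1 / A0 ^ 3
        + (μ₁ ^ 2 * i0 ^ 2 + μ₂ ^ 2 * j0 ^ 2) * (3 * A1 ^ 2 / (2 * A0 ^ 4)
          - A2 / (2 * A0 ^ 3))) := by
  have hd : 0 < μ₁ - μ₂ := by linarith
  have hsum : 0 < μ₁ + μ₂ := by linarith
  have hds : μ₁ ^ 2 - μ₂ ^ 2 ≠ 0 := by
    have : μ₁ ^ 2 - μ₂ ^ 2 = (μ₁ - μ₂) * (μ₁ + μ₂) := by ring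
    rw [this]; positivity
  have hroot : ∀ k : ℝ, 0 < k → Jet (fun t => Real.sqrt (k ^ 2 - L t ^ 2)) k 0 (-L1 ^ 2 / k) := by
    intro k hk
    have h1 : Jet (fun t => k ^ 2 - L t ^ 2) (k ^ 2) 0 (-2 * L1 ^ 2) := by
      refine (((Jet.const (k ^ 2)).add ((Jet.const (-1)).mul (hL.mul hL))).congr
        (fun t => ?_)).cast ?_ ?_ ?_ <;> ring
    refine (h1.sqrt hk).cast rfl (by simp) ?_
    field_simp; ring
  have hLd := hroot _ hd
  have hLs := hroot _ hsum
  have hplus : Jet (fun t => Real.sqrt ((μ₁ - μ₂) ^ 2 - L t ^ 2)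
      + Real.sqrt ((μ₁ + μ₂) ^ 2 - L t ^ 2)) (2 * μ₁) 0 (-2 * μ₁ * L1 ^ 2 / (μ₁ ^ 2 - μ₂ ^ 2)) := by
    refine (hLd.add hLs).cast (by ring) (by ring) ?_
    have : μ₁ ^ 2 - μ₂ ^ 2 = (μ₁ - μ₂) * (μ₁ + μ₂) := by ring
    rw [this]; field_simp; ring
  have hminus : Jet (fun t => Real.sqrt ((μ₁ - μ₂) ^ 2 - L t ^ 2)
      + (-1) * Real.sqrt ((μ₁ + μ₂) ^ 2 - L t ^ 2)) (-2 * μ₂) 0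
      (-2 * μ₂ * L1 ^ 2 / (μ₁ ^ 2 - μ₂ ^ 2)) := by
    refine (hLd.add ((Jet.const (-1)).mul hLs)).cast (by ring) (by ring) ?_
    have : μ₁ ^ 2 - μ₂ ^ 2 = (μ₁ - μ₂) * (μ₁ + μ₂) := by ring
    rw [this]; field_simp; ring
  have hnum := (((hplus.mul hplus).mul (hi.mul hi)).add ((hminus.mul hminus).mul (hj.mul hj)))
  have hden := ((Jet.const 16).mul (hA.mul hA)).inv (by positivity)
  have hall := hnum.mul hden
  refine (hall.congr fun t => ?_).cast ?_ ?_ ?_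
  · simp only [fred, div_eq_mul_inv]
    ring
  · field_simp; ring
  · field_simp; ring
  · field_simp; ring

lemma jet_invsqrt {f : ℝ → ℝ} {r b c : ℝ} (k : ℝ) (hf : Jet f (r ^ 2) b c) (hr : 0 < r) :
    Jet (fun t => k / Real.sqrt (f t)) (k / r) (-k * b / (2 * r ^ 3))
      (k * (3 * b ^ 2 / (4 * r ^ 5) - c / (2 * r ^ 3))) := by
  refine ((Jet.const k).mul ((hf.sqrt hr).inv hr.ne')).cast ?_ ?_ ?_
  · field_simp
  · field_simp; ring
  · field_simp; ring

lemma jet_kin1 (ν μ₁ μ₂ q₁ q₄ a0 a1 a2 a3 b0 b1 b2 b3 : ℝ) (hν : ν ≠ 0) (hμ : μ₁ > μ₂)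
    (hμ₂ : 0 < μ₂) (hq₁ : 0 < q₁) (hq₄ : 0 < q₄) {A L : ℝ → ℝ}
    (hA : Jet A (q₁ * q₄ / 2) ((a0 * q₄ + q₁ * a3) / 2) (a0 * a3 - a1 * a2))
    (hL : Jet L 0 (q₁ * b1 - q₄ * b2) (2 * (a0 * b1 - a1 * b0 + a2 * b3 - a3 * b2))) :
    ∃ x y, Jet (fun t => (1 / (2 * ν)) * ((0 + t * b0) ^ 2 + (0 + t * b1) ^ 2 +
        fred μ₁ μ₂ (A t) (0 + t * a2) (q₄ + t * a3) (L t))) x y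
      (b0 ^ 2 / ν + b1 ^ 2 / ν
        + μ₂ ^ 2 * (q₁ * b1 - q₄ * b2) ^ 2 / (ν * q₁ ^ 2 * (μ₁ ^ 2 - μ₂ ^ 2))
        + μ₁ ^ 2 / (ν * q₁ ^ 2 * q₄ ^ 2) * a2 ^ 2
        + 2 * (μ₂ ^ 2 / (ν * q₁ ^ 3 * q₄)) * a1 * a2
        + 3 * μ₂ ^ 2 / (ν * q₁ ^ 4) * a0 ^ 2) := by
  have hds : μ₁ ^ 2 - μ₂ ^ 2 ≠ 0 := by nlinarith
  have hf := jet_fred hμ hμ₂ hA (Jet.affine 0 a2) (Jet.affine q₄ a3) hL (by positivity)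
  have h := (Jet.const (1 / (2 * ν))).mul
    ((((Jet.affine 0 b0).mul (Jet.affine 0 b0)).add ((Jet.affine 0 b1).mul (Jet.affine 0 b1))).add hf)
  refine ⟨_, _, (h.congr fun t => ?_).cast rfl rfl ?_⟩
  · ring
  · field_simp; ring

lemma jet_kin2 (ν μ₁ μ₂ q₁ q₄ a0 a1 a2 a3 b0 b1 b2 b3 : ℝ) (hν : ν ≠ 0) (hμ : μ₁ > μ₂)
    (hμ₂ : 0 < μ₂) (hq₁ : 0 < q₁) (hq₄ : 0 < q₄) {A L : ℝ → ℝ}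
    (hA : Jet A (q₁ * q₄ / 2) ((a0 * q₄ + q₁ * a3) / 2) (a0 * a3 - a1 * a2))
    (hL : Jet L 0 (q₁ * b1 - q₄ * b2) (2 * (a0 * b1 - a1 * b0 + a2 * b3 - a3 * b2))) :
    ∃ x y, Jet (fun t => (1 / (2 * ν)) * ((0 + t * b2) ^ 2 + (0 + t * b3) ^ 2 +
        fred μ₁ μ₂ (A t) (q₁ + t * a0) (0 + t * a1) (L t))) x y
      (b2 ^ 2 / ν + b3 ^ 2 / ν
        - μ₁ ^ 2 * (q₁ * b1 - q₄ * b2) ^ 2 / (ν * q₄ ^ 2 * (μ₁ ^ 2 - μ₂ ^ 2))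
        + μ₂ ^ 2 / (ν * q₁ ^ 2 * q₄ ^ 2) * a1 ^ 2
        + 2 * (μ₁ ^ 2 / (ν * q₁ * q₄ ^ 3)) * a1 * a2
        + 3 * μ₁ ^ 2 / (ν * q₄ ^ 4) * a3 ^ 2) := by
  have hds : μ₁ ^ 2 - μ₂ ^ 2 ≠ 0 := by nlinarith
  have hf := jet_fred hμ hμ₂ hA (Jet.affine q₁ a0) (Jet.affine 0 a1) hL (by positivity)
  have h := (Jet.const (1 / (2 * ν))).mul
    ((((Jet.affine 0 b2).mul (Jet.affine 0 b2)).add ((Jet.affine 0 b3).mul (Jet.affine 0 b3))).add hf)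
  refine ⟨_, _, (h.congr fun t => ?_).cast rfl rfl ?_⟩
  · ring
  · field_simp; ring

lemma jet_pot (m m₁ q₁ q₄ a0 a1 a2 a3 ρ : ℝ) (hm : 0 < m) (hq₁ : 0 < q₁)
    (hρ : 0 < ρ) (hρ2 : ρ ^ 2 = q₁ ^ 2 / 4 + q₄ ^ 2) :
    ∃ x y, Jet (fun t => Vnewt m₁ m m ![(q₁ + t * a0) ^ 2 + (0 + t * a1) ^ 2,
        (0 + t * a2) ^ 2 + (q₄ + t * a3) ^ 2,
        (q₁ + t * a0) * (0 + t * a2) + (0 + t * a1) * (q₄ + t * a3)]) x y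
      ((m ^ 2 / q₁ ^ 3 + 4 * m * m₁ * (q₁ ^ 2 - 8 * q₄ ^ 2) / (32 * ρ ^ 5)) * a1 ^ 2
        + 2 * (-(48 * m * m₁ * q₁ * q₄) / (32 * ρ ^ 5)) * a1 * a2
        + (-(32 * m * m₁ * (q₁ ^ 2 - 2 * q₄ ^ 2) / (32 * ρ ^ 5))) * a2 ^ 2
        + (-2 * m ^ 2 / q₁ ^ 3 - 8 * m * m₁ * (q₁ ^ 2 - 2 * q₄ ^ 2) / (32 * ρ ^ 5)) * a0 ^ 2
        + 2 * (-(48 * m * m₁ * q₁ * q₄) / (32 * ρ ^ 5)) * a0 * a3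
        + (16 * m * m₁ * (q₁ ^ 2 - 8 * q₄ ^ 2) / (32 * ρ ^ 5)) * a3 ^ 2) := by
  have hq0 := Jet.affine q₁ a0
  have hq1 := Jet.affine 0 a1
  have hq2 := Jet.affine 0 a2
  have hq3 := Jet.affine q₄ a3
  have hhalf : m / (m + m) = 1 / 2 := by field_simp; norm_num
  have hs0 : Jet (fun t => (q₁ + t * a0) ^ 2 + (0 + t * a1) ^ 2) (q₁ ^ 2) (2 * q₁ * a0)
      (2 * (a0 ^ 2 + a1 ^ 2)) := by
    refine (((hq0.mul hq0).add (hq1.mul hq1)).congr fun t => ?_).cast ?_ ?_ ?_ <;> ring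
  have hs1 : Jet (fun t => (0 + t * a2) ^ 2 + (q₄ + t * a3) ^ 2) (q₄ ^ 2) (2 * q₄ * a3)
      (2 * (a2 ^ 2 + a3 ^ 2)) := by
    refine (((hq2.mul hq2).add (hq3.mul hq3)).congr fun t => ?_).cast ?_ ?_ ?_ <;> ring
  have hs2 : Jet (fun t => (q₁ + t * a0) * (0 + t * a2) + (0 + t * a1) * (q₄ + t * a3)) 0
      (q₁ * a2 + q₄ * a1) (2 * (a0 * a2 + a1 * a3)) := by
    refine (((hq0.mul hq2).add (hq1.mul hq3))).cast ?_ ?_ ?_ <;> ring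
  have hp := ((((Jet.const (1 / 4)).mul hs0).add hs1).add hs2).cast
    (a' := ρ ^ 2) (b' := q₁ * a0 / 2 + 2 * q₄ * a3 + (q₁ * a2 + q₄ * a1))
    (c' := (a0 ^ 2 + a1 ^ 2) / 2 + 2 * (a2 ^ 2 + a3 ^ 2) + 2 * (a0 * a2 + a1 * a3))
    (by rw [hρ2]; ring) (by ring) (by ring)
  have hn := ((((Jet.const (1 / 4)).mul hs0).add hs1).add ((Jet.const (-1)).mul hs2)).cast
    (a' := ρ ^ 2) (b' := q₁ * a0 / 2 + 2 * q₄ * a3 - (q₁ * a2 + q₄ * a1))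
    (c' := (a0 ^ 2 + a1 ^ 2) / 2 + 2 * (a2 ^ 2 + a3 ^ 2) - 2 * (a0 * a2 + a1 * a3))
    (by rw [hρ2]; ring) (by ring) (by ring)
  have h := ((jet_invsqrt (-(m * m)) hs0 hq₁).add (jet_invsqrt (-(m * m₁)) hp hρ)).add
    (jet_invsqrt (-(m₁ * m)) hn hρ)
  refine ⟨_, _, (h.congr fun t => ?_).cast rfl rfl ?_⟩
  · simp only [Vnewt, hhalf, Matrix.cons_val]
    rw [show ∀ x y z : ℝ, (1 / 2 : ℝ) ^ 2 * x + y + 2 * (1 / 2) * z = 1 / 4 * x + y + z from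
      fun x y z => by ring, show ∀ x y z : ℝ, (1 / 2 : ℝ) ^ 2 * x + y - 2 * (1 / 2) * z
        = 1 / 4 * x + y + -1 * z from fun x y z => by ring]
    ring
  · have h3 : ∀ x : ℝ, x / (2 * ρ ^ 3) = x * (q₁ ^ 2 / 4 + q₄ ^ 2) / (2 * ρ ^ 5) := by
      intro x; rw [← hρ2]; field_simp
    rw [h3, h3]
    field_simp
    ring

lemma jet_H (m m₁ ν₁ ν₂ μ₁ μ₂ q₁ q₄ ρ : ℝ) (hm : 0 < m) (hν₁ : ν₁ ≠ 0) (hν₂ : ν₂ ≠ 0)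
    (hμ : μ₁ > μ₂) (hμ₂ : 0 < μ₂) (hq₁ : 0 < q₁) (hq₄ : 0 < q₄)
    (hρ : 0 < ρ) (hρ2 : ρ ^ 2 = q₁ ^ 2 / 4 + q₄ ^ 2) (u : PS) :
    ∃ x y, Jet (fun t : ℝ => Hred ν₁ ν₂ μ₁ μ₂ (Vnewt m₁ m m)
        ((![q₁, 0, 0, q₄], 0) + t • u)) x y
      ((u.2 0) ^ 2 / ν₁ + (u.2 1) ^ 2 / ν₁
        + μ₂ ^ 2 * (q₁ * u.2 1 - q₄ * u.2 2) ^ 2 / (ν₁ * q₁ ^ 2 * (μ₁ ^ 2 - μ₂ ^ 2))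
        + μ₁ ^ 2 / (ν₁ * q₁ ^ 2 * q₄ ^ 2) * (u.1 2) ^ 2
        + 2 * (μ₂ ^ 2 / (ν₁ * q₁ ^ 3 * q₄)) * u.1 1 * u.1 2
        + 3 * μ₂ ^ 2 / (ν₁ * q₁ ^ 4) * (u.1 0) ^ 2 +
       ((u.2 2) ^ 2 / ν₂ + (u.2 3) ^ 2 / ν₂
        - μ₁ ^ 2 * (q₁ * u.2 1 - q₄ * u.2 2) ^ 2 / (ν₂ * q₄ ^ 2 * (μ₁ ^ 2 - μ₂ ^ 2))
        + μ₂ ^ 2 / (ν₂ * q₁ ^ 2 * q₄ ^ 2) * (u.1 1) ^ 2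
        + 2 * (μ₁ ^ 2 / (ν₂ * q₁ * q₄ ^ 3)) * u.1 1 * u.1 2
        + 3 * μ₁ ^ 2 / (ν₂ * q₄ ^ 4) * (u.1 3) ^ 2) +
       ((m ^ 2 / q₁ ^ 3 + 4 * m * m₁ * (q₁ ^ 2 - 8 * q₄ ^ 2) / (32 * ρ ^ 5)) * (u.1 1) ^ 2
        + 2 * (-(48 * m * m₁ * q₁ * q₄) / (32 * ρ ^ 5)) * u.1 1 * u.1 2
        + (-(32 * m * m₁ * (q₁ ^ 2 - 2 * q₄ ^ 2) / (32 * ρ ^ 5))) * (u.1 2) ^ 2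
        + (-2 * m ^ 2 / q₁ ^ 3 - 8 * m * m₁ * (q₁ ^ 2 - 2 * q₄ ^ 2) / (32 * ρ ^ 5)) * (u.1 0) ^ 2
        + 2 * (-(48 * m * m₁ * q₁ * q₄) / (32 * ρ ^ 5)) * u.1 0 * u.1 3
        + (16 * m * m₁ * (q₁ ^ 2 - 8 * q₄ ^ 2) / (32 * ρ ^ 5)) * (u.1 3) ^ 2)) := by
  obtain ⟨a, b⟩ := u
  have hq0 := Jet.affine q₁ (a 0)
  have hq1 := Jet.affine 0 (a 1)
  have hq2 := Jet.affine 0 (a 2)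
  have hq3 := Jet.affine q₄ (a 3)
  have hA : Jet (fun t => ((q₁ + t * a 0) * (q₄ + t * a 3) - (0 + t * a 1) * (0 + t * a 2)) / 2)
      (q₁ * q₄ / 2) ((a 0 * q₄ + q₁ * a 3) / 2) (a 0 * a 3 - a 1 * a 2) := by
    refine (((Jet.const (1 / 2)).mul ((hq0.mul hq3).add ((Jet.const (-1)).mul
      (hq1.mul hq2)))).congr fun t => ?_).cast ?_ ?_ ?_ <;> ring
  have hL : Jet (fun t => (q₁ + t * a 0) * (0 + t * b 1) - (0 + t * a 1) * (0 + t * b 0)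
      + (0 + t * a 2) * (0 + t * b 3) - (q₄ + t * a 3) * (0 + t * b 2))
      0 (q₁ * b 1 - q₄ * b 2) (2 * (a 0 * b 1 - a 1 * b 0 + a 2 * b 3 - a 3 * b 2)) := by
    refine (((((hq0.mul (Jet.affine 0 (b 1))).add ((Jet.const (-1)).mul
      (hq1.mul (Jet.affine 0 (b 0))))).add (hq2.mul (Jet.affine 0 (b 3)))).add
      ((Jet.const (-1)).mul (hq3.mul (Jet.affine 0 (b 2))))).congr fun t => ?_).cast ?_ ?_ ?_
      <;> ring
  obtain ⟨x1, y1, h1⟩ := jet_kin1 ν₁ μ₁ μ₂ q₁ q₄ (a 0) (a 1) (a 2) (a 3) (b 0) (b 1) (b 2) (b 3)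
    hν₁ hμ hμ₂ hq₁ hq₄ hA hL
  obtain ⟨x2, y2, h2⟩ := jet_kin2 ν₂ μ₁ μ₂ q₁ q₄ (a 0) (a 1) (a 2) (a 3) (b 0) (b 1) (b 2) (b 3)
    hν₂ hμ hμ₂ hq₁ hq₄ hA hL
  obtain ⟨x3, y3, h3⟩ := jet_pot m m₁ q₁ q₄ (a 0) (a 1) (a 2) (a 3) ρ hm hq₁ hρ hρ2
  refine ⟨_, _, ((h1.add h2).add h3).congr fun t => ?_⟩
  rfl

lemma contDiffAt_H (m m₁ ν₁ ν₂ μ₁ μ₂ q₁ q₄ : ℝ) (hm : 0 < m)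
    (hμ : μ₁ > μ₂) (hμ₂ : 0 < μ₂) (hq₁ : 0 < q₁) (hq₄ : 0 < q₄) :
    ContDiffAt ℝ 2 (Hred ν₁ ν₂ μ₁ μ₂ (Vnewt m₁ m m)) (![q₁, 0, 0, q₄], 0) := by
  have hd : 0 < μ₁ - μ₂ := by linarith
  have hsum : 0 < μ₁ + μ₂ := by linarith
  have hhalf : m / (m + m) = 1 / 2 := by field_simp; norm_num
  have hq : ∀ i : Fin 4, ContDiffAt ℝ 2 (fun z : PS => z.1 i) (![q₁, 0, 0, q₄], 0) := by
    intro i; fun_prop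
  have hp : ∀ i : Fin 4, ContDiffAt ℝ 2 (fun z : PS => z.2 i) (![q₁, 0, 0, q₄], 0) := by
    intro i; fun_prop
  unfold Hred fred Vnewt
  simp only [hhalf, Matrix.cons_val]
  have hsq : ∀ k : ℝ, 0 < k → ContDiffAt ℝ 2 (fun z : PS => Real.sqrt (k ^ 2 - (z.1 0 * z.2 1 -
      z.1 1 * z.2 0 + z.1 2 * z.2 3 - z.1 3 * z.2 2) ^ 2)) (![q₁, 0, 0, q₄], 0) := by
    intro k hk
    refine ContDiffAt.sqrt (by fun_prop) ?_
    simp; positivity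
  have h1 := hsq _ hd
  have h2 := hsq _ hsum
  have hA : ContDiffAt ℝ 2 (fun z : PS => 16 * ((z.1 0 * z.1 3 - z.1 1 * z.1 2) / 2) ^ 2)
    (![q₁, 0, 0, q₄], 0) := by fun_prop
  have hA0 : (fun z : PS => 16 * ((z.1 0 * z.1 3 - z.1 1 * z.1 2) / 2) ^ 2)
    (![q₁, 0, 0, q₄], 0) ≠ 0 := by simp [hq₁.ne', hq₄.ne']
  have hV : ∀ (k : ℝ) (g : PS → ℝ), ContDiffAt ℝ 2 g (![q₁, 0, 0, q₄], 0) →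
      0 < g (![q₁, 0, 0, q₄], 0) → ContDiffAt ℝ 2 (fun z => k / Real.sqrt (g z))
        (![q₁, 0, 0, q₄], 0) := by
    intro k g hg h0
    exact contDiffAt_const.div (hg.sqrt h0.ne') (Real.sqrt_pos.2 h0).ne'
  refine ((contDiffAt_const.mul (((hp 0).pow 2).add ((hp 1).pow 2) |>.add ?_)).add
    (contDiffAt_const.mul (((hp 2).pow 2).add ((hp 3).pow 2) |>.add ?_))).add
    (((hV _ _ (by fun_prop) ?_).neg.sub (hV _ _ (by fun_prop) ?_)).sub (hV _ _ (by fun_prop) ?_))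
  · exact ((((h1.add h2).pow 2).mul ((hq 2).pow 2)).add (((h1.sub h2).pow 2).mul ((hq 3).pow 2))).div
      hA hA0
  · exact ((((h1.add h2).pow 2).mul ((hq 0).pow 2)).add (((h1.sub h2).pow 2).mul ((hq 1).pow 2))).div
      hA hA0
  · simp; positivity
  · simp; positivity
  · simp; positivity

set_option maxHeartbeats 4000000 in
/-- For two equal masses `m₂ = m₃ = m`, at a point with positions `(q₁,0,0,q₄)` and
zero momenta the Hessian of the fully reduced Hamiltonian is block diagonal with
respect to the grouping `{q₂,q₃}, {q₁,q₄}, {p₂,p₃}, {p₁}, {p₄}`, with the stated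
`1×1` and `2×2` blocks. -/
theorem isosceles_hessian (m m₁ μ₁ μ₂ q₁ q₄ : ℝ) (hm : 0 < m) (hm₁ : 0 < m₁)
    (hμ : μ₁ > μ₂) (hμ₂ : 0 < μ₂) (hq₁ : 0 < q₁) (hq₄ : 0 < q₄) :
    (let ν₁ := m / 2
     let ν₂ := 2 * m * m₁ / (2 * m + m₁)
     let H := Hred ν₁ ν₂ μ₁ μ₂ (Vnewt m₁ m m)
     let zs : PS := (![q₁, 0, 0, q₄], 0)
     let R := (q₁ ^ 2 + 4 * q₄ ^ 2) ^ ((5 : ℝ) / 2)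
     -- block diagonality
     (∀ i j : Fin 8, grp i ≠ grp j → D2 H zs (bvec i) (bvec j) = 0) ∧
     -- the two 1×1 blocks
     D2 H zs (eP 0) (eP 0) = 1 / ν₁ ∧
     D2 H zs (eP 3) (eP 3) = 1 / ν₂ ∧
     -- the (q₂,q₃) block
     D2 H zs (eQ 1) (eQ 1) =
       μ₂ ^ 2 / (ν₂ * q₁ ^ 2 * q₄ ^ 2) + m ^ 2 / q₁ ^ 3 +
         4 * m * m₁ * (q₁ ^ 2 - 8 * q₄ ^ 2) / R ∧
     D2 H zs (eQ 1) (eQ 2) =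
       μ₁ ^ 2 / (ν₂ * q₁ * q₄ ^ 3) + μ₂ ^ 2 / (ν₁ * q₁ ^ 3 * q₄) -
         48 * m * m₁ * q₁ * q₄ / R ∧
     D2 H zs (eQ 2) (eQ 1) =
       μ₁ ^ 2 / (ν₂ * q₁ * q₄ ^ 3) + μ₂ ^ 2 / (ν₁ * q₁ ^ 3 * q₄) -
         48 * m * m₁ * q₁ * q₄ / R ∧
     D2 H zs (eQ 2) (eQ 2) =
       μ₁ ^ 2 / (ν₁ * q₁ ^ 2 * q₄ ^ 2) - 32 * m * m₁ * (q₁ ^ 2 - 2 * q₄ ^ 2) / R ∧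
     -- the (q₁,q₄) block
     D2 H zs (eQ 0) (eQ 0) =
       3 * μ₂ ^ 2 / (ν₁ * q₁ ^ 4) - 2 * m ^ 2 / q₁ ^ 3 -
         8 * m * m₁ * (q₁ ^ 2 - 2 * q₄ ^ 2) / R ∧
     D2 H zs (eQ 0) (eQ 3) = -(48 * m * m₁ * q₁ * q₄) / R ∧
     D2 H zs (eQ 3) (eQ 0) = -(48 * m * m₁ * q₁ * q₄) / R ∧
     D2 H zs (eQ 3) (eQ 3) =
       3 * μ₁ ^ 2 / (ν₂ * q₄ ^ 4) + 16 * m * m₁ * (q₁ ^ 2 - 8 * q₄ ^ 2) / R ∧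
     -- the (p₂,p₃) block
     D2 H zs (eP 1) (eP 1) =
       (1 / (μ₁ ^ 2 - μ₂ ^ 2)) * (μ₁ ^ 2 * (1 / ν₁ - q₁ ^ 2 / (ν₂ * q₄ ^ 2))) ∧
     D2 H zs (eP 1) (eP 2) =
       (1 / (μ₁ ^ 2 - μ₂ ^ 2)) * (μ₁ ^ 2 * q₁ / (ν₂ * q₄) - μ₂ ^ 2 * q₄ / (ν₁ * q₁)) ∧
     D2 H zs (eP 2) (eP 1) =
       (1 / (μ₁ ^ 2 - μ₂ ^ 2)) * (μ₁ ^ 2 * q₁ / (ν₂ * q₄) - μ₂ ^ 2 * q₄ / (ν₁ * q₁)) ∧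
     D2 H zs (eP 2) (eP 2) =
       (1 / (μ₁ ^ 2 - μ₂ ^ 2)) * (μ₂ ^ 2 * (q₄ ^ 2 / (ν₁ * q₁ ^ 2) - 1 / ν₂))) := by
  intro ν₁ ν₂ H zs R
  have hν₁ : ν₁ ≠ 0 := by simp only [ν₁]; positivity
  have hν₂ : ν₂ ≠ 0 := by simp only [ν₂]; positivity
  clear_value ν₁ ν₂
  have hds : μ₁ ^ 2 - μ₂ ^ 2 ≠ 0 := by nlinarith
  have hH : ContDiffAt ℝ 2 H zs := contDiffAt_H m m₁ ν₁ ν₂ μ₁ μ₂ q₁ q₄ hm hμ hμ₂ hq₁ hq₄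
  obtain ⟨ρ, hρ, hρ2⟩ : ∃ ρ : ℝ, 0 < ρ ∧ ρ ^ 2 = q₁ ^ 2 / 4 + q₄ ^ 2 :=
    ⟨Real.sqrt (q₁ ^ 2 / 4 + q₄ ^ 2), Real.sqrt_pos.2 (by positivity),
      Real.sq_sqrt (by positivity)⟩
  have hR : R = 32 * ρ ^ 5 := by
    simp only [R]
    rw [show q₁ ^ 2 + 4 * q₄ ^ 2 = (2 * ρ) ^ (2 : ℝ) by
      rw [Real.rpow_two, mul_pow, hρ2]; ring, ← Real.rpow_mul (by positivity)]
    norm_num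
    ring
  clear_value R
  subst hR
  have hQ := fun u => (jet_H m m₁ ν₁ ν₂ μ₁ μ₂ q₁ q₄ ρ hm hν₁ hν₂ hμ hμ₂ hq₁ hq₄ hρ hρ2 u)
  have key : ∀ u v : PS, D2 H zs u v = (D2 H zs (u + v) (u + v) - D2 H zs u u - D2 H zs v v) / 2 :=
    D2_polar hH
  have hdiag : ∀ u : PS, D2 H zs u u = _ := fun u => by
    obtain ⟨x, y, h⟩ := hQ u
    exact D2_diag_of_jet hH h
  have gen : ∀ u v : PS, D2 H zs u v = _ := fun u v => by
    rw [key, hdiag (u + v), hdiag u, hdiag v]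
  clear_value H
  clear hQ key hdiag hH
  refine ⟨?_, ?_, ?_, ?_, ?_, ?_, ?_, ?_, ?_, ?_, ?_, ?_, ?_, ?_, ?_⟩
  · intro i j hij
    rw [gen]
    fin_cases i <;> fin_cases j <;> first
      | exact absurd rfl hij
      | (simp [bvec, eQ, eP]; done)
      | (simp [bvec, eQ, eP]; ring)
  all_goals
    rw [gen]
    simp [eQ, eP]
    try field_simp
    try ring

end
end
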